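/- arXiv:2408.16148 — 4 statements merged into one kernel-verified Lean document; each statement's English description precedes it below -/
import Mathlib

section
/- Let d be a positive integer, let m_1,…,m_d and u_1,…,u_{d−1} be non-negative integers, and set s := (m_1+2, {1}_{u_1}, …, m_{d−1}+2, {1}_{u_{d−1}}, m_d+2) with weight |s| equal to the sum of its components. Let p ∈ (0,1). Then ζ*(s) = Li*_{{1}_{|s|}}( ⊔_{i=1}^{d−1}{1−p, {1}_{m_i}, 1/(1−p), {1}_{u_i}}, 1−p, {1}_{m_d}, 1/(1−p) ) − Li*_{{1}_{|s|}}( ⊔_{i=1}^{d−1}{1−p, {1}_{m_i}, 1/(1−p), {1}_{u_i}}, 1−p, {1}_{m_d+1} ). -/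
/-- One-dimensional polylogarithm `Li_s(x) = ∑_{n≥1} x^n/n^s`. -/
noncomputable def Li (s : ℕ) (x : ℝ) : ℝ := ∑' n : ℕ, x ^ (n + 1) / (n + 1 : ℝ) ^ s

/-- Multiple polylogarithm
`Li*_{s₁,…,s_d}(x₁,…,x_d) = ∑_{n₁ ≥ ⋯ ≥ n_d ≥ 1} ∏ᵢ xᵢ^{nᵢ}/nᵢ^{sᵢ}`. -/
noncomputable def LiStar (s : List ℕ) (x : List ℝ) : ℝ :=
  ∑' m : {m : Fin s.length → ℕ // (∀ i j : Fin s.length, i ≤ j → m j ≤ m i) ∧ ∀ i, 1 ≤ m i},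
    ∏ i : Fin s.length, x.getD (i : ℕ) 0 ^ m.1 i / (m.1 i : ℝ) ^ s.get i

/-- The exponent tuple `s = (m₁+2, {1}_{u₁}, …, m_d+2, {1}_{u_d}, m_{d+1}+2)`
(here `d+1` plays the role of the paper's `d ≥ 1`). -/
def sTup (d : ℕ) (m : Fin (d + 1) → ℕ) (u : Fin d → ℕ) : List ℕ :=
  (List.ofFn fun i : Fin d => (m i.castSucc + 2) :: List.replicate (u i) 1).flatten ++
    [m (Fin.last d) + 2]

/-- The argument prefix `⊔_{i=1}^{d}{1−p, {1}_{mᵢ}, 1/(1−p), {1}_{uᵢ}}`. -/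
noncomputable def xPre (d : ℕ) (m : Fin (d + 1) → ℕ) (u : Fin d → ℕ) (p : ℝ) : List ℝ :=
  (List.ofFn fun i : Fin d =>
    (1 - p) :: (List.replicate (m i.castSucc) (1 : ℝ) ++
      (1 / (1 - p)) :: List.replicate (u i) (1 : ℝ))).flatten

/-- Nested sums. -/
noncomputable def NSr : List (ℕ → ℝ) → ℕ → ℝ
  | [], _ => 1
  | w :: ws, n => ∑ k ∈ Finset.range n, w (k + 1) * NSr ws (k + 1)

noncomputable def TopS : List (ℕ → ℝ) → ENNReal
  | [] => 1
  | w :: ws => ∑' n : ℕ, ENNReal.ofReal (w (n + 1) * NSr ws (n + 1))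

noncomputable def wt (s : ℕ) (x : ℝ) : ℕ → ℝ := fun n => x ^ n / (n : ℝ) ^ s

lemma wt_nonneg (s : ℕ) {x : ℝ} (hx : 0 ≤ x) (n : ℕ) : 0 ≤ wt s x n := by
  unfold wt; positivity

lemma NSr_nonneg (L : List (ℕ → ℝ)) (h : ∀ w ∈ L, ∀ n, 0 ≤ w n) (n : ℕ) : 0 ≤ NSr L n := by
  induction L generalizing n with
  | nil => simp [NSr]
  | cons w ws ih =>
    simp only [NSr]
    refine Finset.sum_nonneg fun k _ => mul_nonneg (h w (by simp) _) (ih (fun v hv => h v (by simp [hv])) _)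

/-- bounded sums over weakly decreasing tuples -/
noncomputable def GS (n : ℕ) (w : Fin n → ℕ → ℝ) (b : ℕ∞) : ENNReal :=
  open Classical in
  ∑' m : Fin n → ℕ,
    if ((∀ i j : Fin n, i ≤ j → m j ≤ m i) ∧ ∀ i, 1 ≤ m i) ∧ ∀ i, (m i : ℕ∞) ≤ b then
      ∏ i, ENNReal.ofReal (w i (m i)) else 0

lemma GS_cond (n : ℕ) (a : ℕ) (t : Fin n → ℕ) (b : ℕ∞) :
    (((∀ i j : Fin (n+1), i ≤ j → (Fin.cons a t : Fin (n+1) → ℕ) j ≤ (Fin.cons a t : Fin (n+1) → ℕ) i) ∧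
      ∀ i, 1 ≤ (Fin.cons a t : Fin (n+1) → ℕ) i) ∧ ∀ i, (((Fin.cons a t : Fin (n+1) → ℕ) i : ℕ) : ℕ∞) ≤ b) ↔
    (1 ≤ a ∧ (a : ℕ∞) ≤ b) ∧ (((∀ i j : Fin n, i ≤ j → t j ≤ t i) ∧ ∀ i, 1 ≤ t i) ∧
      ∀ i, (t i : ℕ∞) ≤ (a : ℕ∞)) := by
  constructor
  · rintro ⟨⟨h1, h2⟩, h3⟩
    refine ⟨⟨by simpa using h2 0, by simpa using h3 0⟩, ⟨fun i j hij => ?_, fun i => ?_⟩, fun i => ?_⟩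
    · simpa using h1 i.succ j.succ (by simpa using hij)
    · simpa using h2 i.succ
    · simpa using h1 0 i.succ (by simp)
  · rintro ⟨⟨h1, h2⟩, ⟨h3, h4⟩, h5⟩
    refine ⟨⟨fun i j hij => ?_, fun i => ?_⟩, fun i => ?_⟩
    · cases i using Fin.cases with
      | zero =>
        cases j using Fin.cases with
        | zero => simp
        | succ j => simpa using h5 j
      | succ i =>
        cases j using Fin.cases with
        | zero => exact absurd hij (by simp)
        | succ j => simpa using h3 i j (by simpa using hij)
    · cases i using Fin.cases with
      | zero => simpa using h1
      | succ i => simpa using h4 i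
    · cases i using Fin.cases with
      | zero => simpa using h2
      | succ i => simpa using (h5 i).trans h2

lemma GS_succ (n : ℕ) (w : Fin (n + 1) → ℕ → ℝ) (b : ℕ∞) :
    GS (n + 1) w b = open Classical in ∑' a : ℕ, if 1 ≤ a ∧ (a : ℕ∞) ≤ b then
      ENNReal.ofReal (w 0 a) * GS n (fun i => w i.succ) a else 0 := by
  classical
  unfold GS
  rw [← (Fin.consEquiv (fun _ : Fin (n+1) => ℕ)).tsum_eq, ENNReal.tsum_prod']
  refine tsum_congr fun a => ?_
  by_cases h : 1 ≤ a ∧ (a : ℕ∞) ≤ b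
  · rw [if_pos h, ← ENNReal.tsum_mul_left]
    refine tsum_congr fun t => ?_
    simp only [Fin.consEquiv, Equiv.coe_fn_mk, GS_cond, h, true_and, Fin.prod_univ_succ,
      Fin.cons_zero, Fin.cons_succ, mul_ite, mul_zero]
  · rw [if_neg h, ENNReal.tsum_eq_zero]
    intro t
    simp only [Fin.consEquiv, Equiv.coe_fn_mk, GS_cond, h, false_and, if_false]

lemma GS_fin (n : ℕ) (w : Fin n → ℕ → ℝ) (hw : ∀ i k, 0 ≤ w i k) (b : ℕ) :
    GS n w b = ENNReal.ofReal (NSr (List.ofFn w) b) := by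
  classical
  induction n generalizing b with
  | zero => simp [GS, NSr]
  | succ n ih =>
    rw [GS_succ, List.ofFn_succ]
    simp only [NSr]
    rw [tsum_eq_sum (s := Finset.Ico 1 (b+1)), Finset.sum_Ico_eq_sum_range, ENNReal.ofReal_sum_of_nonneg]
    · refine Finset.sum_congr (by simp) fun k hk => ?_
      have : k < b := by simpa using hk
      rw [if_pos ⟨by omega, by exact_mod_cast (by omega : 1 + k ≤ b)⟩, ih _ (fun i k => hw _ _),
        ENNReal.ofReal_mul (hw _ _), add_comm 1 k]
    · intro k _
      refine mul_nonneg (hw _ _) (NSr_nonneg _ ?_ _)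
      intro v hv
      rw [List.mem_ofFn] at hv
      obtain ⟨i, rfl⟩ := hv
      exact hw _
    · intro a ha
      rw [if_neg]
      rintro ⟨h1, h2⟩
      have h2' : a ≤ b := by exact_mod_cast h2
      exact ha (by simp; omega)

lemma GS_top (n : ℕ) (w : Fin n → ℕ → ℝ) (hw : ∀ i k, 0 ≤ w i k) :
    GS n w ⊤ = TopS (List.ofFn w) := by
  classical
  cases n with
  | zero => simp [GS, TopS]
  | succ n =>
    rw [GS_succ, List.ofFn_succ]
    simp only [TopS]
    rw [tsum_eq_zero_add' ENNReal.summable]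
    simp only [nonpos_iff_eq_zero, one_ne_zero, false_and, if_false, zero_add]
    refine tsum_congr fun k => ?_
    rw [if_pos ⟨by omega, le_top⟩, GS_fin _ _ (fun i k => hw _ _), ENNReal.ofReal_mul (hw _ _)]

lemma LiStar_eq (s : List ℕ) (x : List ℝ) (hl : s.length = x.length) (hx : ∀ y ∈ x, 0 ≤ y) :
    LiStar s x = (TopS (List.zipWith wt s x)).toReal := by
  classical
  have hx' : ∀ i : ℕ, 0 ≤ x.getD i 0 := by
    intro i
    by_cases h : i < x.length
    · rw [List.getD_eq_getElem _ _ h]; exact hx _ (List.getElem_mem h)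
    · rw [List.getD_eq_default _ _ (by omega)]
  have e : List.zipWith wt s x = List.ofFn (fun i : Fin s.length => wt (s.get i) (x.getD i 0)) := by
    apply List.ext_getElem
    · simp [hl]
    · intro i h1 h2
      have h3 : i < s.length := by simpa using h2
      have h4 : i < x.length := by omega
      simp [h4]
  rw [e, ← GS_top _ _ (fun i k => wt_nonneg _ (hx' _) _)]
  unfold LiStar GS
  have := tsum_subtype {m : Fin s.length → ℕ | (∀ i j : Fin s.length, i ≤ j → m j ≤ m i) ∧ ∀ i, 1 ≤ m i}
    (fun m => ∏ i : Fin s.length, x.getD (i : ℕ) 0 ^ m i / (m i : ℝ) ^ s.get i)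
  refine this.trans ?_
  rw [ENNReal.tsum_toReal_eq]
  · refine tsum_congr fun m => ?_
    simp only [Set.indicator, Set.mem_ofPred_eq, le_top, implies_true, and_true]
    split_ifs
    · rw [ENNReal.toReal_prod]
      refine Finset.prod_congr rfl fun i _ => ?_
      rw [ENNReal.toReal_ofReal (wt_nonneg _ (hx' _) _)]
      rfl
    · simp
  · intro m
    split_ifs
    · exact ENNReal.prod_ne_top (fun i _ => ENNReal.ofReal_ne_top)
    · simp

/-- Euler means -/
noncomputable def EM (p : ℝ) (f : ℕ → ℝ) (n : ℕ) : ℝ :=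
  ∑ k ∈ Finset.range (n + 1), (n.choose k : ℝ) * p ^ k * (1 - p) ^ (n - k) * f k

lemma EM_add (p : ℝ) (f g : ℕ → ℝ) (n : ℕ) : EM p (fun k => f k + g k) n = EM p f n + EM p g n := by
  simp [EM, mul_add, Finset.sum_add_distrib]

lemma EM_zero (p : ℝ) (f : ℕ → ℝ) : EM p f 0 = f 0 := by simp [EM]

lemma EM_succ (p : ℝ) (f : ℕ → ℝ) (n : ℕ) :
    EM p f (n + 1) = (1 - p) * EM p f n + p * EM p (fun k => f (k + 1)) n := by
  have h1 : (1 - p) * EM p f n = ∑ k ∈ Finset.range (n + 2),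
      (n.choose k : ℝ) * p ^ k * (1 - p) ^ (n + 1 - k) * f k := by
    rw [Finset.sum_range_succ _ (n+1), EM, Finset.mul_sum]
    simp only [Nat.choose_succ_self, Nat.cast_zero, zero_mul, add_zero]
    refine Finset.sum_congr rfl fun k hk => ?_
    have : k ≤ n := by simpa [Nat.lt_succ_iff] using hk
    rw [Nat.succ_sub this, pow_succ]; ring
  rw [h1, EM, Finset.sum_range_succ' _ (n+1), Finset.sum_range_succ' _ (n+1), EM, Finset.mul_sum,
    add_right_comm, ← Finset.sum_add_distrib]
  congr 1
  · refine Finset.sum_congr rfl fun k hk => ?_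
    rw [Nat.choose_succ_succ]
    simp only [Nat.add_sub_add_right]
    push_cast; ring
  · simp

lemma EM_div (p : ℝ) (f : ℕ → ℝ) (h0 : f 0 = 0) (n : ℕ) :
    EM p f (n + 1) / ((n + 1 : ℕ) : ℝ) = p * EM p (fun k => f (k + 1) / ((k + 1 : ℕ) : ℝ)) n := by
  rw [EM, Finset.sum_range_succ' _ (n+1), EM, Finset.mul_sum, h0, mul_zero, add_zero, Finset.sum_div]
  refine Finset.sum_congr rfl fun k hk => ?_
  have h : ((n + 1 : ℕ) : ℝ) * (n.choose k : ℝ) = ((n + 1).choose (k + 1) : ℝ) * ((k + 1 : ℕ) : ℝ) := by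
    exact_mod_cast Nat.add_one_mul_choose_eq n k
  have a1 : ((n + 1 : ℕ) : ℝ) ≠ 0 := by positivity
  have a2 : ((k + 1 : ℕ) : ℝ) ≠ 0 := by positivity
  have h' : ((n + 1).choose (k + 1) : ℝ) = ((n + 1 : ℕ) : ℝ) * (n.choose k : ℝ) / ((k + 1 : ℕ) : ℝ) := by
    rw [h]; field_simp
  rw [h', Nat.add_sub_add_right]
  field_simp
  ring

lemma EM_sumD (p : ℝ) (f : ℕ → ℝ) (h0 : f 0 = 0) (n : ℕ) :
    ∑ k ∈ Finset.range n, EM p f (k + 1) / ((k + 1 : ℕ) : ℝ) =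
      EM p (fun n => ∑ k ∈ Finset.range n, f (k + 1) / ((k + 1 : ℕ) : ℝ)) n := by
  induction n with
  | zero => simp [EM_zero]
  | succ n ih =>
    rw [Finset.sum_range_succ, ih, EM_div p f h0, EM_succ]
    simp only [Finset.sum_range_succ]
    rw [EM_add]; ring

lemma EM_q (p : ℝ) (hp : 1 - p ≠ 0) (f : ℕ → ℝ) (h0 : f 0 = 0) (n : ℕ) :
    (1 - p) ^ n * ∑ k ∈ Finset.range n, (1 / (1 - p)) ^ (k + 1) * (EM p f (k + 1) / ((k + 1 : ℕ) : ℝ)) =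
      EM p (fun n => f n / (n : ℝ)) n := by
  induction n with
  | zero => simp [EM_zero]
  | succ n ih =>
    rw [Finset.sum_range_succ, mul_add, pow_succ', mul_assoc, ih, EM_succ p (fun n => f n / (n : ℝ)), ← EM_div p f h0]
    congr 1
    rw [one_div, inv_pow, ← pow_succ', mul_inv_cancel_left₀ (pow_ne_zero _ hp)]

lemma EM_nonneg (p : ℝ) (h0 : 0 ≤ p) (h1 : 0 ≤ 1 - p) (f : ℕ → ℝ) (hf : ∀ n, 0 ≤ f n) (n : ℕ) :
    0 ≤ EM p f n := by
  refine Finset.sum_nonneg fun k _ => ?_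
  have := hf k
  positivity

lemma EM_tsum (p : ℝ) (h0 : 0 < p) (h1 : 0 < 1 - p) (f : ℕ → ℝ) (hf : ∀ n, 0 ≤ f n) (hz : f 0 = 0) :
    ∑' n : ℕ, ENNReal.ofReal (EM p f (n + 1) / ((n + 1 : ℕ) : ℝ)) =
      ∑' n : ℕ, ENNReal.ofReal (f (n + 1) / ((n + 1 : ℕ) : ℝ)) := by
  set g : ℕ → ℝ := fun k => f (k + 1) / ((k + 1 : ℕ) : ℝ) with hg
  have hgn : ∀ k, 0 ≤ g k := fun k => div_nonneg (hf _) (by positivity)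
  have e1 : ∀ n, ENNReal.ofReal (EM p f (n + 1) / ((n + 1 : ℕ) : ℝ)) =
      ∑' k, ENNReal.ofReal (p * ((n.choose k : ℝ) * p ^ k * (1 - p) ^ (n - k))) * ENNReal.ofReal (g k) := by
    intro n
    rw [EM_div p f hz, EM, Finset.mul_sum, ENNReal.ofReal_sum_of_nonneg, tsum_eq_sum (s := Finset.range (n+1))]
    · refine Finset.sum_congr rfl fun k _ => ?_
      rw [← ENNReal.ofReal_mul (by positivity)]
      congr 1; ring
    · intro k hk
      have : n < k := by simpa using hk
      simp [Nat.choose_eq_zero_of_lt this]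
    · intro k _
      have := hgn k
      positivity
  simp_rw [e1]
  rw [ENNReal.tsum_comm]
  refine tsum_congr fun k => ?_
  rw [ENNReal.tsum_mul_right]
  have : ∑' n : ℕ, ENNReal.ofReal (p * ((n.choose k : ℝ) * p ^ k * (1 - p) ^ (n - k))) = 1 := by
    have hs := hasSum_choose_mul_geometric_of_norm_lt_one (𝕜 := ℝ) k (r := 1 - p)
      (by rw [Real.norm_eq_abs, abs_lt]; constructor <;> linarith)
    have hs2 := hs.mul_left (p ^ (k + 1))
    rw [← (ENNReal.summable).sum_add_tsum_nat_add' (k := k)] 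
    rw [Finset.sum_eq_zero, zero_add]
    · have e2 : ∀ n, ENNReal.ofReal (p * (((n + k).choose k : ℝ) * p ^ k * (1 - p) ^ (n + k - k))) =
         ENNReal.ofReal (p ^ (k + 1) * (((n + k).choose k : ℝ) * (1 - p) ^ n)) := by
        intro n; congr 1; rw [Nat.add_sub_cancel]; ring
      simp_rw [e2]
      rw [← ENNReal.ofReal_tsum_of_nonneg (fun n => by positivity) hs2.summable, hs2.tsum_eq]
      have : p ≠ 0 := h0.ne'
      simp [this]
    · intro n hn
      simp [Nat.choose_eq_zero_of_lt (Finset.mem_range.mp hn)]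
  rw [this, one_mul]

def InvS (p : ℝ) (xl sl : List (ℕ → ℝ)) : Prop :=
  ∃ (A B : List (ℕ → ℝ)) (m : ℕ), xl = wt 1 (1 - p) :: A ∧ sl = wt (m + 2) 1 :: B ∧
    (∀ w ∈ B, ∀ n, 0 ≤ w n) ∧
    ∀ a, (1 - p) ^ a * NSr A a = EM p (fun k => NSr B k / (k : ℝ) ^ (m + 1)) a

lemma InvS.fin {p : ℝ} {xl sl : List (ℕ → ℝ)} (h : InvS p xl sl) (n : ℕ) :
    NSr xl n = EM p (NSr sl) n := by
  obtain ⟨A, B, m, rfl, rfl, -, h⟩ := h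
  have := EM_sumD p (fun k => NSr B k / (k : ℝ) ^ (m + 1)) (by simp) n
  have e2 : (NSr (wt (m + 2) 1 :: B)) = (fun n => ∑ k ∈ Finset.range n,
      (NSr B (k + 1) / ((k + 1 : ℕ) : ℝ) ^ (m + 1)) / ((k + 1 : ℕ) : ℝ)) := by
    funext n
    simp only [NSr, wt]
    refine Finset.sum_congr rfl fun k _ => ?_
    rw [one_pow, div_div, ← pow_succ]; ring
  rw [e2, ← this]
  simp only [NSr, wt]
  refine Finset.sum_congr rfl fun k _ => ?_
  rw [← h]; ring

lemma InvS.top {p : ℝ} (h0 : 0 < p) (h1 : 0 < 1 - p) {xl sl : List (ℕ → ℝ)} (h : InvS p xl sl) :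
    TopS xl = TopS sl := by
  obtain ⟨A, B, m, rfl, rfl, hB, h⟩ := h
  have := EM_tsum p h0 h1 (fun k => NSr B k / (k : ℝ) ^ (m + 1))
    (fun n => div_nonneg (NSr_nonneg B hB n) (by positivity)) (by simp)
  simp only [TopS, wt]
  refine Eq.trans ?_ (this.trans ?_)
  · refine tsum_congr fun k => ?_
    rw [← h]; congr 1; ring
  · refine tsum_congr fun k => ?_
    rw [one_pow, div_div, ← pow_succ]; congr 1; ring

lemma NSr_rep (p : ℝ) (R S : List (ℕ → ℝ)) (h : ∀ n, NSr R n = EM p (NSr S) n) (h0 : NSr S 0 = 0)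
    (u : ℕ) : (∀ n, NSr (List.replicate u (wt 1 1) ++ R) n =
      EM p (NSr (List.replicate u (wt 1 1) ++ S)) n) ∧ NSr (List.replicate u (wt 1 1) ++ S) 0 = 0 := by
  induction u with
  | zero => simpa using ⟨h, h0⟩
  | succ u ih =>
    obtain ⟨i1, i2⟩ := ih
    refine ⟨fun n => ?_, by simp [List.replicate_succ, NSr]⟩
    have := EM_sumD p (NSr (List.replicate u (wt 1 1) ++ S)) i2 n
    have e2 : NSr (List.replicate (u + 1) (wt 1 1) ++ S) = (fun n => ∑ k ∈ Finset.range n,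
      NSr (List.replicate u (wt 1 1) ++ S) (k + 1) / ((k + 1 : ℕ) : ℝ)) := by
      funext n
      simp only [List.replicate_succ, List.cons_append, NSr, wt]
      refine Finset.sum_congr rfl fun k _ => ?_
      rw [one_pow]; ring
    rw [e2, ← this]
    simp only [List.replicate_succ, List.cons_append, NSr]
    refine Finset.sum_congr rfl fun k _ => ?_
    rw [i1, wt, one_pow]; ring

lemma NSr_qstep (p : ℝ) (hp : 1 - p ≠ 0) (A : List (ℕ → ℝ)) (f : ℕ → ℝ) (h0 : f 0 = 0)
    (h : ∀ a, (1 - p) ^ a * NSr A a = EM p f a) (j : ℕ) :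
    ∀ a, (1 - p) ^ a * NSr (List.replicate j (wt 1 1) ++ A) a = EM p (fun k => f k / (k : ℝ) ^ j) a := by
  induction j with
  | zero => simpa using h
  | succ j ih =>
    intro a
    have := EM_q p hp (fun k => f k / (k : ℝ) ^ j) (by simp [h0]) a
    have e : (fun k : ℕ => f k / (k : ℝ) ^ (j + 1)) = (fun n : ℕ => f n / (n : ℝ) ^ j / (n : ℝ)) := by
      funext k; rw [div_div, ← pow_succ]
    rw [e, ← this]
    congr 1
    simp only [List.replicate_succ, List.cons_append, NSr]
    refine Finset.sum_congr rfl fun k _ => ?_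
    rw [← ih, one_div, inv_pow, mul_div_assoc, inv_mul_cancel_left₀ (pow_ne_zero _ hp), wt, one_pow]
    ring

lemma InvS_block (p : ℝ) (hp : 1 - p ≠ 0) (v : ℕ → ℝ) (R S : List (ℕ → ℝ)) (f : ℕ → ℝ) (h0 : f 0 = 0)
    (hf : ∀ k, f (k + 1) = NSr S (k + 1)) (hS : ∀ w ∈ S, ∀ n, 0 ≤ w n)
    (hv : ∀ k, v (k + 1) * NSr R (k + 1) = wt 1 (1 / (1 - p)) (k + 1) * EM p f (k + 1)) (m : ℕ) :
    InvS p (wt 1 (1 - p) :: (List.replicate m (wt 1 1) ++ v :: R)) (wt (m + 2) 1 :: S) := by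
  refine ⟨_, _, m, rfl, rfl, hS, ?_⟩
  have e : (fun k : ℕ => NSr S k / (k : ℝ) ^ (m + 1)) = (fun k : ℕ => f k / (k : ℝ) / (k : ℝ) ^ m) := by
    funext k
    rw [div_div, ← pow_succ']
    cases k with
    | zero => simp
    | succ k => rw [hf]
  rw [e]
  refine NSr_qstep p hp _ (fun k => f k / (k : ℝ)) (by simp) ?_ m
  intro a
  rw [← EM_q p hp f h0]
  congr 1
  simp only [NSr]
  refine Finset.sum_congr rfl fun k _ => ?_
  rw [hv, wt]; ring

lemma EM_one (p : ℝ) (n : ℕ) : EM p (fun _ => 1) n = 1 := by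
  induction n with
  | zero => simp [EM]
  | succ n ih => rw [EM_succ, ih]; ring

lemma EM_ind (p : ℝ) (n : ℕ) : EM p (fun k => if k = 0 then 0 else 1) n = 1 - (1 - p) ^ n := by
  induction n with
  | zero => simp [EM]
  | succ n ih => rw [EM_succ, ih]; simp [EM_one]; ring

noncomputable def vv (p : ℝ) : ℕ → ℝ := fun n => wt 1 (1 / (1 - p)) n * (1 - (1 - p) ^ n)

noncomputable def XL (d : ℕ) (m : Fin (d + 1) → ℕ) (u : Fin d → ℕ) (p : ℝ) (v : ℕ → ℝ) :
    List (ℕ → ℝ) :=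
  (xPre d m u p).map (wt 1) ++ (wt 1 (1 - p) :: (List.replicate (m (Fin.last d)) (wt 1 1) ++ [v]))

lemma sTup_succ (d : ℕ) (m : Fin (d + 2) → ℕ) (u : Fin (d + 1) → ℕ) :
    sTup (d + 1) m u = (m 0 + 2) :: (List.replicate (u 0) 1 ++
      sTup d (fun i => m i.succ) (fun i => u i.succ)) := by
  simp [sTup, List.ofFn_succ]

lemma xPre_succ (d : ℕ) (m : Fin (d + 2) → ℕ) (u : Fin (d + 1) → ℕ) (p : ℝ) :
    xPre (d + 1) m u p = (1 - p) :: (List.replicate (m 0) 1 ++ (1 / (1 - p)) ::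
      (List.replicate (u 0) 1 ++ xPre d (fun i => m i.succ) (fun i => u i.succ) p)) := by
  simp [xPre, List.ofFn_succ]

lemma Inv_main (p : ℝ) (hp : 1 - p ≠ 0) (d : ℕ) (m : Fin (d + 1) → ℕ) (u : Fin d → ℕ) :
    InvS p (XL d m u p (vv p)) ((sTup d m u).map (fun s => wt s 1)) := by
  induction d with
  | zero =>
    have := InvS_block p hp (vv p) [] [] (fun k => if k = 0 then 0 else 1) (by simp)
      (by simp [NSr]) (by simp) (by intro k; rw [EM_ind]; simp [NSr, vv]) (m 0)
    simpa [XL, xPre, sTup] using this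
  | succ d ih =>
    have i := ih (fun i => m i.succ) (fun i => u i.succ)
    have hz : NSr ((sTup d (fun i => m i.succ) (fun i => u i.succ)).map (fun s => wt s 1)) 0 = 0 := by
      obtain ⟨A, B, m, -, h, -⟩ := i
      rw [h]; simp [NSr]
    obtain ⟨r1, r2⟩ := NSr_rep p _ _ i.fin hz (u 0)
    have := InvS_block p hp (wt 1 (1 / (1 - p))) _ _ _ r2 (fun _ => rfl)
      (by
        intro w hw n
        simp only [List.mem_append, List.mem_replicate, List.mem_map] at hw
        rcases hw with ⟨-, rfl⟩ | ⟨s, -, rfl⟩ <;> exact wt_nonneg _ zero_le_one _)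
      (fun k => by rw [r1]) (m 0)
    rw [sTup_succ]
    unfold XL
    rw [xPre_succ]
    simpa [XL] using this

lemma NSr_add (L : List (ℕ → ℝ)) (v w : ℕ → ℝ) (n : ℕ) :
    NSr (L ++ [fun k => v k + w k]) n = NSr (L ++ [v]) n + NSr (L ++ [w]) n := by
  induction L generalizing n with
  | nil => simp [NSr, Finset.sum_add_distrib]
  | cons a L ih => simp only [List.cons_append, NSr, ih, mul_add, Finset.sum_add_distrib]

lemma NSr_le (L : List (ℕ → ℝ)) (hL : ∀ w ∈ L, ∀ n, 0 ≤ w n) (v w : ℕ → ℝ) (c : ℝ)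
    (h : ∀ k, v (k + 1) ≤ c * w (k + 1)) (n : ℕ) :
    NSr (L ++ [v]) n ≤ c * NSr (L ++ [w]) n := by
  induction L generalizing n with
  | nil =>
    simp only [List.nil_append, NSr, Finset.mul_sum, mul_one]
    exact Finset.sum_le_sum fun k _ => h k
  | cons a L ih =>
    simp only [List.cons_append, NSr, Finset.mul_sum]
    refine Finset.sum_le_sum fun k _ => ?_
    have := mul_le_mul_of_nonneg_left (ih (fun w hw => hL w (by simp [hw])) (k + 1))
      (hL a (by simp) (k + 1))
    linarith

lemma TopS_add (a : ℕ → ℝ) (L : List (ℕ → ℝ)) (v w : ℕ → ℝ) (hL : ∀ w ∈ a :: L, ∀ n, 0 ≤ w n)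
    (hv : ∀ n, 0 ≤ v n) (hw : ∀ n, 0 ≤ w n) :
    TopS (a :: L ++ [fun k => v k + w k]) = TopS (a :: L ++ [v]) + TopS (a :: L ++ [w]) := by
  simp only [List.cons_append, TopS, NSr_add, mul_add]
  rw [← ENNReal.tsum_add]
  refine tsum_congr fun n => ?_
  have ha := hL a (by simp) (n + 1)
  have hv' : ∀ z ∈ L ++ [v], ∀ n, 0 ≤ z n := by
    intro z hz
    rcases List.mem_append.1 hz with hz | hz
    · exact hL z (by simp [hz])
    · rw [List.mem_singleton.1 hz]; exact hv
  have hw' : ∀ z ∈ L ++ [w], ∀ n, 0 ≤ z n := by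
    intro z hz
    rcases List.mem_append.1 hz with hz | hz
    · exact hL z (by simp [hz])
    · rw [List.mem_singleton.1 hz]; exact hw
  exact ENNReal.ofReal_add (mul_nonneg ha (NSr_nonneg _ hv' _)) (mul_nonneg ha (NSr_nonneg _ hw' _))

lemma TopS_le (a : ℕ → ℝ) (L : List (ℕ → ℝ)) (v w : ℕ → ℝ) (hL : ∀ w ∈ a :: L, ∀ n, 0 ≤ w n)
    (c : ℝ) (hc : 0 ≤ c) (h : ∀ k, v (k + 1) ≤ c * w (k + 1)) :
    TopS (a :: L ++ [v]) ≤ ENNReal.ofReal c * TopS (a :: L ++ [w]) := by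
  simp only [List.cons_append, TopS]
  rw [← ENNReal.tsum_mul_left]
  refine ENNReal.tsum_le_tsum fun n => ?_
  rw [← ENNReal.ofReal_mul hc]
  apply ENNReal.ofReal_le_ofReal
  have := mul_le_mul_of_nonneg_left (NSr_le L (fun w hw => hL w (by simp [hw])) v w c h (n + 1))
      (hL a (by simp) (n + 1))
  linarith

lemma sum_inv_sqrt (n : ℕ) : ∑ k ∈ Finset.range n, 1 / √((k + 1 : ℕ) : ℝ) ≤ 2 * √(n : ℝ) := by
  induction n with
  | zero => simp
  | succ n ih =>
    rw [Finset.sum_range_succ]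
    have h1 : 0 < √((n + 1 : ℕ) : ℝ) := by positivity
    have h2 := Real.sq_sqrt (Nat.cast_nonneg (α := ℝ) (n + 1))
    have h3 := Real.sq_sqrt (Nat.cast_nonneg (α := ℝ) n)
    have h4 := Real.sqrt_nonneg (n : ℝ)
    have : 1 / √((n + 1 : ℕ) : ℝ) ≤ 2 * √((n + 1 : ℕ) : ℝ) - 2 * √(n : ℝ) := by
      rw [div_le_iff₀ h1]
      push_cast at *
      nlinarith [sq_nonneg (√((n : ℝ) + 1) - √(n : ℝ))]
    linarith

lemma NSr_growth (l : List ℕ) (hl : ∀ s ∈ l, 1 ≤ s) (n : ℕ) (hn : 1 ≤ n) :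
    NSr (l.map (fun s => wt s 1)) n ≤ 2 ^ l.length * √(n : ℝ) := by
  induction l generalizing n with
  | nil => simp [NSr]; exact_mod_cast hn
  | cons s l ih =>
    simp only [List.map_cons, NSr, List.length_cons]
    calc _ ≤ ∑ k ∈ Finset.range n, 2 ^ l.length * (1 / √((k + 1 : ℕ) : ℝ)) := by
          refine Finset.sum_le_sum fun k _ => ?_
          have i := ih (fun s hs => hl s (by simp [hs])) (k + 1) (by omega)
          have hw : wt s 1 (k + 1) ≤ 1 / ((k + 1 : ℕ) : ℝ) := by
            rw [wt, one_pow]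
            apply one_div_le_one_div_of_le (by positivity)
            exact le_self_pow₀ (by exact_mod_cast Nat.le_add_left 1 k) (by have := hl s (by simp); omega)
          have h1 : 0 < √((k + 1 : ℕ) : ℝ) := by positivity
          have h2 := Real.mul_self_sqrt (Nat.cast_nonneg (α := ℝ) (k + 1))
          calc _ ≤ 1 / ((k + 1 : ℕ) : ℝ) * (2 ^ l.length * √((k + 1 : ℕ) : ℝ)) := by
                refine mul_le_mul hw i (NSr_nonneg _ ?_ _) (by positivity)
                intro w hw
                obtain ⟨s, -, rfl⟩ := List.mem_map.1 hw
                exact wt_nonneg _ zero_le_one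
            _ = _ := by
                nth_rewrite 1 [← h2]
                field_simp
      _ = 2 ^ l.length * ∑ k ∈ Finset.range n, (1 / √((k + 1 : ℕ) : ℝ)) := by rw [Finset.mul_sum]
      _ ≤ 2 ^ l.length * (2 * √(n : ℝ)) := by gcongr; exact sum_inv_sqrt n
      _ = _ := by ring

lemma TopS_fin (m : ℕ) (l : List ℕ) (hl : ∀ s ∈ l, 1 ≤ s) :
    TopS (((m + 2) :: l).map (fun s => wt s 1)) ≠ ⊤ := by
  simp only [List.map_cons, TopS]
  have hs : Summable (fun n : ℕ => 2 ^ l.length * (1 / (((n + 1 : ℕ) : ℝ) ^ (3 / 2 : ℝ)))) := by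
    apply Summable.mul_left
    exact (summable_nat_add_iff 1).2 (Real.summable_one_div_nat_rpow.2 (by norm_num : (1 : ℝ) < 3 / 2))
  refine ne_top_of_le_ne_top hs.tsum_ofReal_ne_top (ENNReal.tsum_le_tsum fun n => ?_)
  apply ENNReal.ofReal_le_ofReal
  have i := NSr_growth l hl (n + 1) (by omega)
  have hx : (0 : ℝ) < ((n + 1 : ℕ) : ℝ) := by positivity
  have hw : wt (m + 2) 1 (n + 1) ≤ 1 / ((n + 1 : ℕ) : ℝ) ^ 2 := by
    rw [wt, one_pow]
    apply one_div_le_one_div_of_le (by positivity)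
    exact pow_le_pow_right₀ (by exact_mod_cast Nat.le_add_left 1 n) (by omega)
  calc _ ≤ 1 / ((n + 1 : ℕ) : ℝ) ^ 2 * (2 ^ l.length * √((n + 1 : ℕ) : ℝ)) := by
        refine mul_le_mul hw i (NSr_nonneg _ ?_ _) (by positivity)
        intro w hw
        obtain ⟨s, -, rfl⟩ := List.mem_map.1 hw
        exact wt_nonneg _ zero_le_one
    _ = _ := by
        have : ((n + 1 : ℕ) : ℝ) ^ 2 = ((n + 1 : ℕ) : ℝ) ^ (3 / 2 : ℝ) * √((n + 1 : ℕ) : ℝ) := by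
          rw [Real.sqrt_eq_rpow, ← Real.rpow_add hx, ← Real.rpow_natCast]; norm_num
        rw [this]
        have h1 : 0 < √((n + 1 : ℕ) : ℝ) := by positivity
        field_simp

lemma sTup_shape (d : ℕ) (m : Fin (d + 1) → ℕ) (u : Fin d → ℕ) :
    (∀ s ∈ sTup d m u, 1 ≤ s) ∧ ∃ l, sTup d m u = (m 0 + 2) :: l := by
  induction d with
  | zero => simp [sTup]
  | succ d ih =>
    rw [sTup_succ]
    refine ⟨?_, _, rfl⟩
    intro s hs
    simp only [List.mem_cons, List.mem_append, List.mem_replicate] at hs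
    rcases hs with rfl | ⟨-, rfl⟩ | hs
    · omega
    · omega
    · exact (ih _ _).1 s hs

lemma xPre_nonneg (p : ℝ) (hp : 0 < 1 - p) (d : ℕ) (m : Fin (d + 1) → ℕ) (u : Fin d → ℕ) :
    ∀ x ∈ xPre d m u p, 0 ≤ x := by
  induction d with
  | zero => simp [xPre]
  | succ d ih =>
    rw [xPre_succ]
    intro x hs
    simp only [List.mem_cons, List.mem_append, List.mem_replicate] at hs
    rcases hs with rfl | ⟨-, rfl⟩ | rfl | ⟨-, rfl⟩ | hs
    · positivity
    · positivity
    · positivity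
    · positivity
    · exact ih _ _ x hs

lemma sTup_sum (p : ℝ) (d : ℕ) (m : Fin (d + 1) → ℕ) (u : Fin d → ℕ) :
    (sTup d m u).sum = (xPre d m u p).length + (m (Fin.last d) + 2) := by
  induction d with
  | zero => simp [sTup, xPre]
  | succ d ih =>
    rw [sTup_succ, xPre_succ]
    simp only [List.sum_cons, List.sum_append, List.sum_replicate, ih, List.length_cons,
      List.length_append, List.length_replicate, Fin.succ_last, Nat.succ_eq_add_one, smul_eq_mul, mul_one]
    omega

lemma zip1 (l : List ℕ) : List.zipWith wt l (List.replicate l.length (1 : ℝ)) = l.map (fun s => wt s 1) := by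
  induction l with
  | nil => simp
  | cons a l ih => simp [List.replicate_succ, ih]

lemma zip2 (l : List ℝ) : List.zipWith wt (List.replicate l.length 1) l = l.map (wt 1) := by
  induction l with
  | nil => simp
  | cons a l ih => simp [List.replicate_succ, ih]

/-- Multiple zeta-star values as differences of multiple polylogarithms. -/
theorem stmt_13 (d : ℕ) (m : Fin (d + 1) → ℕ) (u : Fin d → ℕ) (p : ℝ)
    (hp : p ∈ Set.Ioo (0 : ℝ) 1) :
    LiStar (sTup d m u) (List.replicate (sTup d m u).length (1 : ℝ)) =
      LiStar (List.replicate (sTup d m u).sum 1)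
          (xPre d m u p ++
            (1 - p) :: (List.replicate (m (Fin.last d)) (1 : ℝ) ++ [1 / (1 - p)])) -
        LiStar (List.replicate (sTup d m u).sum 1)
          (xPre d m u p ++ (1 - p) :: List.replicate (m (Fin.last d) + 1) (1 : ℝ)) := by
  obtain ⟨hp0, hp1⟩ := hp
  have hq : 0 < 1 - p := by linarith
  have hI := (Inv_main p hq.ne' d m u).top hp0 hq
  have hfin : TopS ((sTup d m u).map (fun s => wt s 1)) ≠ ⊤ := by
    obtain ⟨h1, l, h2⟩ := sTup_shape d m u
    rw [h2]
    exact TopS_fin _ _ (fun s hs => h1 s (by rw [h2]; simp [hs]))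
  have hpre := xPre_nonneg p hq d m u
  rw [LiStar_eq _ _ (by simp) (by simp), zip1, LiStar_eq, LiStar_eq]
  rotate_left
  · simp [sTup_sum p]
  · intro y hy
    simp only [List.mem_cons, List.mem_append, List.mem_replicate] at hy
    rcases hy with hy | rfl | ⟨-, rfl⟩
    · exact hpre y hy
    · positivity
    · positivity
  · simp [sTup_sum p]
  · intro y hy
    simp only [List.mem_cons, List.mem_append, List.mem_replicate, List.not_mem_nil, or_false] at hy
    rcases hy with hy | rfl | ⟨-, rfl⟩ | rfl
    · exact hpre y hy
    · positivity
    · positivity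
    · positivity
  have e1 : List.zipWith wt (List.replicate (sTup d m u).sum 1) (xPre d m u p ++
            (1 - p) :: (List.replicate (m (Fin.last d)) (1 : ℝ) ++ [1 / (1 - p)])) =
      XL d m u p (wt 1 (1 / (1 - p))) := by
    have : (sTup d m u).sum = (xPre d m u p ++
            (1 - p) :: (List.replicate (m (Fin.last d)) (1 : ℝ) ++ [1 / (1 - p)])).length := by
      simp [sTup_sum p]
    rw [this, zip2]
    simp [XL]
  have e2 : List.zipWith wt (List.replicate (sTup d m u).sum 1) (xPre d m u p ++
            (1 - p) :: List.replicate (m (Fin.last d) + 1) (1 : ℝ)) =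
      XL d m u p (wt 1 1) := by
    have : (sTup d m u).sum = (xPre d m u p ++
            (1 - p) :: List.replicate (m (Fin.last d) + 1) (1 : ℝ)).length := by
      simp [sTup_sum p]
    rw [this, zip2]
    simp [XL, List.replicate_succ']
  rw [e1, e2, ← hI]
  rw [← hI] at hfin
  obtain ⟨a, L, hX, hL⟩ : ∃ a L, (∀ v, XL d m u p v = a :: L ++ [v]) ∧
      ∀ w ∈ a :: L, ∀ n, 0 ≤ w n := by
    have hmem : ∀ w ∈ (xPre d m u p).map (wt 1) ++ (wt 1 (1 - p) ::
        List.replicate (m (Fin.last d)) (wt 1 1)), ∀ n, 0 ≤ w n := by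
      intro w hw
      simp only [List.mem_cons, List.mem_append, List.mem_replicate, List.mem_map] at hw
      rcases hw with ⟨x, hx, rfl⟩ | rfl | ⟨-, rfl⟩
      · exact wt_nonneg _ (hpre x hx)
      · exact wt_nonneg _ hq.le
      · exact wt_nonneg _ zero_le_one
    cases h : (xPre d m u p).map (wt 1) ++ (wt 1 (1 - p) ::
        List.replicate (m (Fin.last d)) (wt 1 1)) with
    | nil => simp at h
    | cons a L =>
      refine ⟨a, L, fun v => ?_, ?_⟩
      · rw [← h]; simp [XL]
      · rw [← h]; exact hmem
  rw [hX] at hfin ⊢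
  rw [hX, hX]
  have hqn : ∀ n : ℕ, (1 - p) ^ n ≤ 1 := fun n => pow_le_one₀ hq.le (by linarith)
  have hvv : ∀ n, 0 ≤ vv p n := fun n =>
    mul_nonneg (wt_nonneg _ (by positivity) _) (by linarith [hqn n])
  have hsplit : wt 1 (1 / (1 - p)) = fun k => vv p k + wt 1 1 k := by
    funext k
    have : (1 - p) ^ k ≠ 0 := pow_ne_zero _ hq.ne'
    simp only [vv, wt, one_div, inv_pow, one_pow]
    field_simp
    ring
  have hle : TopS (a :: L ++ [wt 1 (1 / (1 - p))]) ≤ ENNReal.ofReal (1 / p) * TopS (a :: L ++ [vv p]) := by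
    refine TopS_le a L _ _ hL _ (by positivity) fun k => ?_
    have h1 : (1 - p) ^ (k + 1) ≤ 1 - p := by
      rw [pow_succ]; nlinarith [hqn k]
    have h2 : 0 ≤ wt 1 (1 / (1 - p)) (k + 1) := wt_nonneg _ (by positivity) _
    rw [vv, one_div_mul_eq_div, le_div_iff₀ hp0]
    exact mul_le_mul_of_nonneg_left (by linarith) h2
  have hf1 : TopS (a :: L ++ [wt 1 (1 / (1 - p))]) ≠ ⊤ :=
    ne_top_of_le_ne_top (ENNReal.mul_ne_top ENNReal.ofReal_ne_top hfin) hle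
  have hadd : TopS (a :: L ++ [wt 1 (1 / (1 - p))]) =
      TopS (a :: L ++ [vv p]) + TopS (a :: L ++ [wt 1 1]) := by
    rw [hsplit]
    exact TopS_add a L _ _ hL hvv (wt_nonneg _ zero_le_one)
  have hf2 : TopS (a :: L ++ [wt 1 1]) ≠ ⊤ := by
    refine ne_top_of_le_ne_top hf1 ?_
    rw [hadd]; exact le_add_self
  rw [hadd, ENNReal.toReal_add hfin hf2]
  ring
end

section
/- For every positive integer d and every p ∈ (0,1), ζ*({2}_d) = Li*_{{1}_{2d}}( {1−p, 1/(1−p)}_d ) − Li*_{{1}_{2d}}( {1−p, 1/(1−p)}_{d−1}, 1−p, 1 ), where {1−p, 1/(1−p)}_r denotes the pair of arguments 1−p, 1/(1−p) repeated r times. -/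
open Finset

/-- Binomial transform. -/
noncomputable def binT (q : ℝ) (f : ℕ → ℝ) (n : ℕ) : ℝ :=
  ∑ k ∈ range (n + 1), (n.choose k : ℝ) * (1 - q) ^ k * q ^ (n - k) * f k

theorem binT_zero (q : ℝ) (f : ℕ → ℝ) : binT q f 0 = f 0 := by simp [binT]

theorem binT_succ (q : ℝ) (f : ℕ → ℝ) (n : ℕ) :
    binT q f (n + 1) = q * binT q f n + (1 - q) * binT q (fun k => f (k + 1)) n := by
  unfold binT
  rw [sum_range_succ']
  have h1 : ∀ k ∈ range (n + 1), ((n + 1).choose (k + 1) : ℝ) * (1 - q) ^ (k + 1) *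
      q ^ (n + 1 - (k + 1)) * f (k + 1) =
      (1 - q) * ((n.choose k : ℝ) * (1 - q) ^ k * q ^ (n - k) * f (k + 1)) +
      (n.choose (k + 1) : ℝ) * (1 - q) ^ (k + 1) * q ^ (n - k) * f (k + 1) := by
    intro k hk
    rw [Nat.choose_succ_succ, Nat.add_sub_add_right]
    push_cast
    ring
  rw [sum_congr rfl h1, sum_add_distrib, ← mul_sum]
  have h2 : q * ∑ k ∈ range (n + 1), (n.choose k : ℝ) * (1 - q) ^ k * q ^ (n - k) * f k =
      ∑ k ∈ range (n + 2), (n.choose k : ℝ) * (1 - q) ^ k * q ^ (n + 1 - k) * f k := by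
    rw [sum_range_succ _ (n + 1), mul_sum]
    simp only [Nat.choose_succ_self, Nat.cast_zero, zero_mul, add_zero]
    refine sum_congr rfl fun k hk => ?_
    have : n + 1 - k = (n - k) + 1 := by have := mem_range.1 hk; omega
    rw [this, pow_succ]; ring
  rw [h2, sum_range_succ' _ (n + 1)]
  simp only [Nat.add_sub_add_right]
  simp
  ring

theorem binT_absorb (q : ℝ) (f : ℕ → ℝ) (hf : f 0 = 0) (n : ℕ) :
    binT q f (n + 1) / ((n + 1 : ℕ) : ℝ) =
      (1 - q) * binT q (fun k => f (k + 1) / ((k + 1 : ℕ) : ℝ)) n := by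
  unfold binT
  rw [sum_range_succ', hf, mul_zero, add_zero, sum_div, mul_sum]
  refine sum_congr rfl fun k hk => ?_
  have h : ((n + 1 : ℕ) : ℝ) * (n.choose k : ℝ) = ((n + 1).choose (k + 1) : ℝ) * ((k + 1 : ℕ) : ℝ) := by
    exact_mod_cast Nat.add_one_mul_choose_eq n k
  have h1 : ((n + 1 : ℕ) : ℝ) ≠ 0 := by positivity
  have h2 : ((k + 1 : ℕ) : ℝ) ≠ 0 := by positivity
  rw [Nat.add_sub_add_right]
  field_simp
  linear_combination (-(1 - q)^k * q^(n-k) * f (k+1) * (1 - q)) * h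

theorem binT_add (q : ℝ) (f g : ℕ → ℝ) (n : ℕ) :
    binT q (fun k => f k + g k) n = binT q f n + binT q g n := by
  simp [binT, mul_add, sum_add_distrib]

theorem binT_L2 (q : ℝ) (u : ℕ → ℝ) (hu : u 0 = 0) (m : ℕ) :
    ∑ l ∈ Icc 1 m, binT q u l / (l : ℝ) =
      binT q (fun k => ∑ j ∈ Icc 1 k, u j / (j : ℝ)) m := by
  induction m with
  | zero => simp [binT]
  | succ m ih =>
    rw [sum_Icc_succ_top (by omega), ih, binT_absorb q u hu, binT_succ]
    have : (fun k => ∑ j ∈ Icc 1 (k + 1), u j / (j : ℝ)) = fun k =>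
        (∑ j ∈ Icc 1 k, u j / (j : ℝ)) + u (k + 1) / ((k + 1 : ℕ) : ℝ) := by
      funext k
      rw [sum_Icc_succ_top (by omega)]
    rw [this, binT_add]
    ring

theorem binT_L3 (q : ℝ) (hq : 0 < q) (f : ℕ → ℝ) (hf : f 0 = 0) (n : ℕ) :
    ∑ m ∈ Icc 1 n, (1 / q) ^ m / (m : ℝ) * binT q f m =
      (1 / q) ^ n * binT q (fun k => f k / (k : ℝ)) n := by
  induction n with
  | zero => simp [binT]
  | succ n ih =>
    rw [sum_Icc_succ_top (by omega), ih, div_mul_eq_mul_div, mul_div_assoc,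
      binT_absorb q f hf, binT_succ, pow_succ]
    field_simp

/-- The inner sums. -/
noncomputable def GG (q : ℝ) (c : ℕ → ℝ) : ℕ → ℕ → ℝ
  | 0, m => c m
  | r + 1, m => ∑ l ∈ Icc 1 m, q ^ l / (l : ℝ) *
      ∑ t ∈ Icc 1 l, (1 / q) ^ t / (t : ℝ) * GG q c r t

noncomputable def FF (q : ℝ) (c : ℕ → ℝ) (r : ℕ) (n : ℕ) : ℝ :=
  ∑ t ∈ Icc 1 n, (1 / q) ^ t / (t : ℝ) * GG q c r t

noncomputable def VV : ℕ → ℕ → ℝ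
  | 0, k => if k = 0 then 0 else 1
  | r + 1, k => ∑ j ∈ Icc 1 k, VV r j / (j : ℝ) ^ 2

theorem VV_zero (r : ℕ) : VV r 0 = 0 := by cases r <;> simp [VV]

theorem VV_nonneg (r k : ℕ) : 0 ≤ VV r k := by
  induction r generalizing k with
  | zero => simp only [VV]; split_ifs <;> norm_num
  | succ r ih => exact sum_nonneg fun j _ => div_nonneg (ih j) (by positivity)

theorem binT_one (q : ℝ) (n : ℕ) : binT q (fun _ => 1) n = 1 := by
  induction n with
  | zero => simp [binT]
  | succ n ih => rw [binT_succ, ih]; ring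

theorem binT_VV0 (q : ℝ) (n : ℕ) : binT q (VV 0) n = 1 - q ^ n := by
  induction n with
  | zero => simp [binT, VV]
  | succ n ih =>
    rw [binT_succ, ih]
    have : (fun k => VV 0 (k + 1)) = fun _ => 1 := by funext k; simp [VV]
    rw [this, binT_one]; ring

theorem GG_eq (q : ℝ) (hq : 0 < q) (r m : ℕ) :
    GG q (fun m => 1 - q ^ m) r m = binT q (VV r) m := by
  induction r generalizing m with
  | zero => rw [binT_VV0, GG]
  | succ r ih =>
    rw [GG]
    simp only [ih, binT_L3 q hq (VV r) (VV_zero r)]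
    have : VV (r + 1) = fun k => ∑ j ∈ Icc 1 k, (VV r j / (j : ℝ)) / (j : ℝ) := by
      funext k
      rw [VV]
      refine sum_congr rfl fun j _ => ?_
      rw [div_div, pow_two]
    rw [this, ← binT_L2 q (fun j => VV r j / (j : ℝ)) (by simp)]
    refine sum_congr rfl fun l _ => ?_
    have : q ^ l * (1 / q) ^ l = 1 := by rw [← mul_pow, mul_one_div_cancel hq.ne', one_pow]
    linear_combination (binT q (fun k => VV r k / (k : ℝ)) l / l) * this

theorem FF_eq (q : ℝ) (hq : 0 < q) (r n : ℕ) :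
    q ^ n / (n : ℝ) * FF q (fun m => 1 - q ^ m) r n
      = binT q (fun k => VV r k / (k : ℝ)) n / (n : ℝ) := by
  unfold FF
  simp only [GG_eq q hq]
  rw [binT_L3 q hq (VV r) (VV_zero r)]
  have : q ^ n * (1 / q) ^ n = 1 := by rw [← mul_pow, mul_one_div_cancel hq.ne', one_pow]
  linear_combination (binT q (fun k => VV r k / (k : ℝ)) n / n) * this

theorem GG_add (q : ℝ) (a b : ℕ → ℝ) (r m : ℕ) :
    GG q (fun m => a m + b m) r m = GG q a r m + GG q b r m := by
  induction r generalizing m with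
  | zero => rfl
  | succ r ih => simp only [GG, ih, mul_add, sum_add_distrib]

theorem FF_add (q : ℝ) (a b : ℕ → ℝ) (r m : ℕ) :
    FF q (fun m => a m + b m) r m = FF q a r m + FF q b r m := by
  simp only [FF, GG_add, mul_add, sum_add_distrib]

theorem GG_nonneg (q : ℝ) (hq : 0 < q) (c : ℕ → ℝ) (hc : ∀ m, 0 ≤ c m) (r m : ℕ) :
    0 ≤ GG q c r m := by
  induction r generalizing m with
  | zero => exact hc m
  | succ r ih =>
    exact sum_nonneg fun l _ => mul_nonneg (by positivity)
      (sum_nonneg fun t _ => mul_nonneg (by positivity) (ih t))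

theorem FF_nonneg (q : ℝ) (hq : 0 < q) (c : ℕ → ℝ) (hc : ∀ m, 0 ≤ c m) (r m : ℕ) :
    0 ≤ FF q c r m :=
  sum_nonneg fun t _ => mul_nonneg (by positivity) (GG_nonneg q hq c hc r t)

theorem harm_bound (q : ℝ) (hq : 0 < q) (hq1 : q < 1) :
    ∃ K : ℝ, 0 ≤ K ∧ ∀ n : ℕ, q ^ n * ∑ m ∈ Icc 1 n, (1 / q) ^ m / (m : ℝ) ≤ K / n := by
  set N : ℝ := 2 / (1 - q) with hN
  have hp : 0 < 1 - q := by linarith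
  have hN0 : 0 < N := by positivity
  set K : ℝ := (N + 1) * N with hK
  have hK0 : 0 < K := by positivity
  have key : ∀ n : ℕ, q ^ n * ∑ m ∈ Icc 1 n, (1 / q) ^ m / (m : ℝ) ≤ K / (n + N) := by
    intro n
    induction n with
    | zero => simp; positivity
    | succ n ih =>
      rw [sum_Icc_succ_top (by omega), mul_add]
      have e1 : q ^ (n + 1) * ((1 / q) ^ (n + 1) / ((n + 1 : ℕ) : ℝ)) = 1 / (n + 1) := by
        rw [← mul_div_assoc, ← mul_pow, mul_one_div_cancel hq.ne', one_pow]; push_cast; rfl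
      rw [e1, pow_succ', mul_assoc]
      have h1 := mul_le_mul_of_nonneg_left ih hq.le
      refine le_trans (add_le_add_left h1 _) ?_
      push_cast
      have hn : (0 : ℝ) ≤ n := Nat.cast_nonneg n
      have h2 : (1 : ℝ) / (n + 1) ≤ (N + 1) / (n + 1 + N) := by
        rw [div_le_div_iff₀ (by positivity) (by positivity)]
        nlinarith [mul_nonneg hn hN0.le]
      have h3 : q * (K / (n + N)) ≤ (K - (N + 1)) / (n + 1 + N) := by
        rw [← mul_div_assoc, div_le_div_iff₀ (by positivity) (by positivity)]
        have hNp : N * (1 - q) = 2 := by rw [hN]; field_simp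
        have : (K - (N + 1)) * (n + N) - q * K * (n + 1 + N)
          = (N + 1) * ((n + N) * (N * (1 - q) - 1) - q * N) := by rw [hK]; ring
        have h5 : 0 ≤ (N + 1) * ((n + N) * (N * (1 - q) - 1) - q * N) := by
          rw [hNp]
          apply mul_nonneg (by linarith)
          nlinarith
        linarith
      calc _ ≤ (K - (N + 1)) / (n + 1 + N) + (N + 1) / (n + 1 + N) := by linarith
        _ = _ := by rw [← add_div]; ring
  refine ⟨K, hK0.le, fun n => ?_⟩
  rcases Nat.eq_zero_or_pos n with h | h
  · subst h; simp
  · have : (0 : ℝ) < n := by exact_mod_cast h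
    exact (key n).trans (by gcongr; linarith)

theorem FF_of_GG (q : ℝ) (hq : 0 < q) (c : ℕ → ℝ) (K C : ℝ)
    (hK : ∀ n : ℕ, q ^ n * ∑ m ∈ Icc 1 n, (1 / q) ^ m / (m : ℝ) ≤ K / n) (hC : 0 ≤ C) (r : ℕ)
    (h : ∀ m, GG q c r m ≤ C) (n : ℕ) :
    q ^ n / (n : ℝ) * FF q c r n ≤ C * K * (1 / (n : ℝ) ^ 2) := by
  have h1 : FF q c r n ≤ (∑ m ∈ Icc 1 n, (1 / q) ^ m / (m : ℝ)) * C := by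
    unfold FF
    rw [sum_mul]
    exact sum_le_sum fun m _ => mul_le_mul_of_nonneg_left (h m) (by positivity)
  calc _ ≤ q ^ n / (n : ℝ) * ((∑ m ∈ Icc 1 n, (1 / q) ^ m / (m : ℝ)) * C) := by gcongr
    _ = C / n * (q ^ n * (∑ m ∈ Icc 1 n, (1 / q) ^ m / (m : ℝ))) := by ring
    _ ≤ C / n * (K / n) := by gcongr; exact hK n
    _ = _ := by ring

theorem GG_bound (q : ℝ) (hq : 0 < q) (hq1 : q < 1) (r : ℕ) :
    ∃ C : ℝ, 0 ≤ C ∧ ∀ m, GG q (fun _ => 1) r m ≤ C := by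
  obtain ⟨K, hK0, hK⟩ := harm_bound q hq hq1
  induction r with
  | zero => exact ⟨1, by norm_num, fun m => le_refl _⟩
  | succ r ih =>
    obtain ⟨C, hC, h⟩ := ih
    have hs : Summable fun n : ℕ => 1 / (n : ℝ) ^ 2 := Real.summable_one_div_nat_pow.2 (by norm_num)
    refine ⟨C * K * ∑' n : ℕ, 1 / (n : ℝ) ^ 2,
      mul_nonneg (mul_nonneg hC hK0) (tsum_nonneg fun n => by positivity), fun m => ?_⟩
    calc GG q (fun _ => 1) (r + 1) m = ∑ l ∈ Icc 1 m, q ^ l / (l : ℝ) * FF q (fun _ => 1) r l := rfl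
      _ ≤ ∑ l ∈ Icc 1 m, C * K * (1 / (l : ℝ) ^ 2) :=
        sum_le_sum fun l _ => FF_of_GG q hq _ K C hK hC r h l
      _ = C * K * ∑ l ∈ Icc 1 m, (1 / (l : ℝ) ^ 2) := by rw [mul_sum]
      _ ≤ _ := by
        gcongr
        exact hs.sum_le_tsum _ fun n _ => by positivity

theorem A_finite (q : ℝ) (hq : 0 < q) (hq1 : q < 1) (r : ℕ) :
    ∑' n : ℕ, ENNReal.ofReal (q ^ n / (n : ℝ) * FF q (fun _ => 1) r n) ≠ ⊤ := by
  obtain ⟨K, hK0, hK⟩ := harm_bound q hq hq1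
  obtain ⟨C, hC, h⟩ := GG_bound q hq hq1 r
  have hs : Summable fun n : ℕ => C * K * (1 / (n : ℝ) ^ 2) :=
    (Real.summable_one_div_nat_pow.2 (by norm_num)).mul_left _
  refine ne_top_of_le_ne_top hs.tsum_ofReal_ne_top (ENNReal.tsum_le_tsum fun n => ?_)
  exact ENNReal.ofReal_le_ofReal (FF_of_GG q hq _ K C hK hC r h n)

theorem binT_L4 (q : ℝ) (hq : 0 < q) (hq1 : q < 1) (u : ℕ → ℝ) (hu0 : u 0 = 0)
    (hu : ∀ k, 0 ≤ u k) :
    ∑' n : ℕ, ENNReal.ofReal (binT q u n / (n : ℝ)) = ∑' n : ℕ, ENNReal.ofReal (u n / (n : ℝ)) := by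
  have hp : 0 < 1 - q := by linarith
  rw [tsum_eq_zero_add' ENNReal.summable, tsum_eq_zero_add' (f := fun n : ℕ =>
    ENNReal.ofReal (u n / (n : ℝ))) ENNReal.summable]
  simp only [binT_absorb q u hu0]
  simp only [Nat.cast_zero, div_zero]
  congr 1
  set g : ℕ → ℝ := fun k => u (k + 1) / ((k + 1 : ℕ) : ℝ) with hg
  have hg0 : ∀ k, 0 ≤ g k := fun k => div_nonneg (hu _) (by positivity)
  have h1 : ∀ n, ENNReal.ofReal ((1 - q) * binT q g n) =
      ∑' k, ENNReal.ofReal ((n.choose k : ℝ) * (1 - q) ^ (k + 1) * q ^ (n - k) * g k) := by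
    intro n
    rw [tsum_eq_sum (s := range (n + 1)), ← ENNReal.ofReal_sum_of_nonneg, binT, mul_sum]
    · congr 1
      refine sum_congr rfl fun k _ => by ring
    · intro k _
      have := hg0 k
      positivity
    · intro k hk
      have : n.choose k = 0 := Nat.choose_eq_zero_of_lt (by simpa using hk)
      simp [this]
  simp only [h1]
  rw [ENNReal.tsum_comm]
  refine tsum_congr fun k => ?_
  have hn : ‖q‖ < 1 := by rw [Real.norm_of_nonneg hq.le]; exact hq1
  have h2 := (hasSum_choose_mul_geometric_of_norm_lt_one k hn).mul_left ((1 - q) ^ (k + 1) * g k)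
  rw [← Summable.sum_add_tsum_nat_add' (f := fun n : ℕ => ENNReal.ofReal ((n.choose k : ℝ) *
    (1 - q) ^ (k + 1) * q ^ (n - k) * g k)) (k := k) ENNReal.summable]
  rw [sum_eq_zero, zero_add]
  · have e : (1 - q) ^ (k + 1) * g k * (1 / (1 - q) ^ (k + 1)) = g k := by field_simp
    rw [e] at h2
    have h3 := ENNReal.ofReal_tsum_of_nonneg (fun n => ?_) h2.summable
    · rw [h2.tsum_eq] at h3
      change _ = ENNReal.ofReal (g k)
      rw [h3]
      refine tsum_congr fun n => ?_
      rw [Nat.add_sub_cancel]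
      congr 1; ring
    · have := hg0 k
      positivity
  · intro n hn
    have : n.choose k = 0 := Nat.choose_eq_zero_of_lt (by simpa using hn)
    simp [this]

theorem main_ident (q : ℝ) (hq : 0 < q) (hq1 : q < 1) (r : ℕ) :
    (∑' n : ℕ, ENNReal.ofReal (VV r n / (n : ℝ) ^ 2)).toReal =
    (∑' n : ℕ, ENNReal.ofReal (q ^ n / (n : ℝ) * FF q (fun _ => 1) r n)).toReal -
    (∑' n : ℕ, ENNReal.ofReal (q ^ n / (n : ℝ) * FF q (fun n => q ^ n) r n)).toReal := by
  have hA := A_finite q hq hq1 r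
  have h1 : ∀ m : ℕ, 0 ≤ 1 - q ^ m := fun m => by linarith [pow_le_one₀ (n := m) hq.le hq1.le]
  have hZ : ∑' n : ℕ, ENNReal.ofReal (VV r n / (n : ℝ) ^ 2) =
      ∑' n : ℕ, ENNReal.ofReal (q ^ n / (n : ℝ) * FF q (fun n => 1 - q ^ n) r n) := by
    simp only [FF_eq q hq]
    rw [binT_L4 q hq hq1 _ (by simp) fun k => div_nonneg (VV_nonneg r k) (by positivity)]
    refine tsum_congr fun n => ?_
    rw [div_div, pow_two]
  have hsum : ∑' n : ℕ, ENNReal.ofReal (q ^ n / (n : ℝ) * FF q (fun _ => 1) r n) =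
      ∑' n : ℕ, ENNReal.ofReal (VV r n / (n : ℝ) ^ 2) +
      ∑' n : ℕ, ENNReal.ofReal (q ^ n / (n : ℝ) * FF q (fun n => q ^ n) r n) := by
    rw [hZ, ← ENNReal.tsum_add]
    refine tsum_congr fun n => ?_
    rw [← ENNReal.ofReal_add, ← mul_add, ← FF_add]
    · simp
    · exact mul_nonneg (by positivity) (FF_nonneg q hq _ h1 r n)
    · exact mul_nonneg (by positivity) (FF_nonneg q hq _ (fun m => by positivity) r n)
  rw [hsum] at hA ⊢
  rw [ENNReal.add_ne_top] at hA
  rw [ENNReal.toReal_add hA.1 hA.2]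
  ring

/-- Admissible tuples. -/
def CondT (k : ℕ) (N : ℕ∞) (m : Fin k → ℕ) : Prop :=
  (∀ i j : Fin k, i ≤ j → m j ≤ m i) ∧ ∀ i, 1 ≤ m i ∧ (m i : ℕ∞) ≤ N

open Classical in
noncomputable def JJ (k : ℕ) (w : ℕ → ℕ → ENNReal) (N : ℕ∞) : ENNReal :=
  ∑' m : Fin k → ℕ, if CondT k N m then ∏ i : Fin k, w i (m i) else 0

theorem CondT_cons (k : ℕ) (N : ℕ∞) (n : ℕ) (m : Fin k → ℕ) :
    CondT (k + 1) N (Fin.cons n m : Fin (k + 1) → ℕ) ↔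
      (1 ≤ n ∧ (n : ℕ∞) ≤ N) ∧ CondT k (n : ℕ∞) m := by
  unfold CondT
  constructor
  · rintro ⟨h1, h2⟩
    refine ⟨by simpa using h2 0, fun i j hij => ?_, fun i => ⟨?_, ?_⟩⟩
    · simpa using h1 i.succ j.succ (Fin.succ_le_succ_iff.2 hij)
    · simpa using (h2 i.succ).1
    · have := h1 0 i.succ (Fin.zero_le _)
      simpa using this
  · rintro ⟨h0, h1, h2⟩
    have h3 : ∀ i, m i ≤ n := fun i => by exact_mod_cast (h2 i).2
    refine ⟨fun i j hij => ?_, fun i => ?_⟩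
    · induction i using Fin.cases with
      | zero =>
        induction j using Fin.cases with
        | zero => simp
        | succ j => simpa using h3 j
      | succ i =>
        induction j using Fin.cases with
        | zero => exact absurd hij (by simp)
        | succ j => simpa using h1 i j (Fin.succ_le_succ_iff.1 hij)
    · induction i using Fin.cases with
      | zero => simpa using h0
      | succ i =>
        simp only [Fin.cons_succ]
        exact ⟨(h2 i).1, le_trans (h2 i).2 h0.2⟩

open Classical in
theorem JJ_succ (k : ℕ) (w : ℕ → ℕ → ENNReal) (N : ℕ∞) :
    JJ (k + 1) w N = ∑' n : ℕ, if 1 ≤ n ∧ (n : ℕ∞) ≤ N then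
      w 0 n * JJ k (fun i => w (i + 1)) (n : ℕ∞) else 0 := by
  unfold JJ
  rw [← Equiv.tsum_eq (Fin.consEquiv (fun _ : Fin (k + 1) => ℕ))]
  rw [ENNReal.tsum_prod (f := fun (a : ℕ) (b : Fin k → ℕ) =>
    if CondT (k + 1) N ((Fin.consEquiv (fun _ : Fin (k + 1) => ℕ)) (a, b)) then
      ∏ i : Fin (k + 1), w i ((Fin.consEquiv (fun _ : Fin (k + 1) => ℕ)) (a, b) i) else 0)]
  refine tsum_congr fun n => ?_
  have e : ∀ m : Fin k → ℕ, (Fin.consEquiv (fun _ : Fin (k + 1) => ℕ)) (n, m) =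
    (Fin.cons n m : Fin (k + 1) → ℕ) := fun m => rfl
  simp only [e, CondT_cons]
  by_cases h : 1 ≤ n ∧ (n : ℕ∞) ≤ N
  · simp only [h, true_and, and_self, if_true]
    rw [← ENNReal.tsum_mul_left]
    refine tsum_congr fun m => ?_
    rw [Fin.prod_univ_succ]
    simp
  · simp only [h, false_and, if_false, tsum_zero]

theorem JJ_zero (w : ℕ → ℕ → ENNReal) (N : ℕ∞) : JJ 0 w N = 1 := by
  unfold JJ
  rw [tsum_eq_single (default : Fin 0 → ℕ) (fun b hb => absurd (Subsingleton.elim _ _) hb)]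
  have : CondT 0 N (default : Fin 0 → ℕ) := ⟨fun i => i.elim0, fun i => i.elim0⟩
  rw [if_pos this]; simp

noncomputable def Jr : ℕ → (ℕ → ℕ → ℝ) → ℕ → ℝ
  | 0, _, _ => 1
  | k + 1, w, n => ∑ m ∈ Icc 1 n, w 0 m * Jr k (fun i => w (i + 1)) m

theorem Jr_nonneg (k : ℕ) (w : ℕ → ℕ → ℝ) (hw : ∀ i n, 0 ≤ w i n) (n : ℕ) : 0 ≤ Jr k w n := by
  induction k generalizing w n with
  | zero => exact zero_le_one
  | succ k ih =>
    exact sum_nonneg fun m _ => mul_nonneg (hw _ _) (ih _ (fun i => hw (i + 1)) m)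

theorem JJ_eq_Jr (k : ℕ) (w : ℕ → ℕ → ℝ) (hw : ∀ i n, 0 ≤ w i n) (n : ℕ) :
    JJ k (fun i n => ENNReal.ofReal (w i n)) (n : ℕ∞) = ENNReal.ofReal (Jr k w n) := by
  induction k generalizing w n with
  | zero => simp [JJ_zero, Jr]
  | succ k ih =>
    rw [JJ_succ, tsum_eq_sum (s := Icc 1 n), Jr, ENNReal.ofReal_sum_of_nonneg]
    · refine sum_congr rfl fun m hm => ?_
      have hm' := mem_Icc.1 hm
      rw [if_pos ⟨hm'.1, by exact_mod_cast hm'.2⟩, ih (fun i => w (i + 1)) (fun i => hw (i + 1)),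
        ENNReal.ofReal_mul (hw _ _)]
    · exact fun m _ => mul_nonneg (hw _ _) (Jr_nonneg k _ (fun i => hw (i + 1)) m)
    · intro m hm
      rw [if_neg]
      rintro ⟨h1, h2⟩
      exact hm (mem_Icc.2 ⟨h1, by exact_mod_cast h2⟩)

theorem JJ_top (k : ℕ) (w : ℕ → ℕ → ℝ) (hw : ∀ i n, 0 ≤ w i n) (hw0 : w 0 0 = 0) :
    JJ (k + 1) (fun i n => ENNReal.ofReal (w i n)) ⊤ =
      ∑' n : ℕ, ENNReal.ofReal (w 0 n * Jr k (fun i => w (i + 1)) n) := by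
  rw [JJ_succ]
  refine tsum_congr fun n => ?_
  rw [JJ_eq_Jr k (fun i => w (i + 1)) (fun i => hw (i + 1)), ENNReal.ofReal_mul (hw _ _)]
  rcases Nat.eq_zero_or_pos n with h | h
  · subst h; simp [hw0]
  · rw [if_pos ⟨h, le_top⟩]

theorem Jr_congr (k : ℕ) (v w : ℕ → ℕ → ℝ) (h : ∀ i < k, ∀ n, v i n = w i n) (n : ℕ) :
    Jr k v n = Jr k w n := by
  induction k generalizing v w n with
  | zero => rfl
  | succ k ih =>
    refine sum_congr rfl fun m _ => ?_
    rw [h 0 (by omega), ih (fun i => v (i + 1)) (fun i => w (i + 1)) (fun i hi => h _ (by omega))]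

theorem Jr_FF (q : ℝ) (c : ℕ → ℝ) (r : ℕ) (v : ℕ → ℕ → ℝ)
    (h1 : ∀ i < r, ∀ n, v (2 * i) n = (1 / q) ^ n / (n : ℝ))
    (h2 : ∀ i < r, ∀ n, v (2 * i + 1) n = q ^ n / (n : ℝ))
    (h3 : ∀ n, v (2 * r) n = (1 / q) ^ n / (n : ℝ) * c n) (n : ℕ) :
    Jr (2 * r + 1) v n = FF q c r n := by
  induction r generalizing v n with
  | zero =>
    simp only [Jr, FF, GG]
    refine sum_congr rfl fun m _ => ?_
    rw [mul_one]; exact h3 m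
  | succ r ih =>
    have e : 2 * (r + 1) + 1 = (2 * r + 1) + 1 + 1 := by ring
    rw [e, Jr, FF]
    refine sum_congr rfl fun m _ => ?_
    rw [h1 0 (by omega) m, Jr, GG]
    congr 1
    refine sum_congr rfl fun l _ => ?_
    have := ih (fun i => v (i + 1 + 1)) (fun i hi n => h1 (i + 1) (by omega) n)
      (fun i hi n => h2 (i + 1) (by omega) n) (fun n => h3 n) l
    rw [this, h2 0 (by omega) l]
    rfl

theorem Jr_VV (r : ℕ) (n : ℕ) (hn : n ≠ 0) :
    Jr r (fun _ n => 1 / (n : ℝ) ^ 2) n = VV r n := by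
  induction r generalizing n with
  | zero => simp [Jr, VV, hn]
  | succ r ih =>
    rw [Jr, VV]
    refine sum_congr rfl fun m hm => ?_
    rw [ih m (by have := mem_Icc.1 hm; omega)]
    ring

theorem LiStar_eq_s14 (s : List ℕ) (x : List ℝ) (hx : ∀ i, 0 ≤ x.getD i 0) :
    LiStar s x = (JJ s.length (fun i n => ENNReal.ofReal
      (x.getD i 0 ^ n / (n : ℝ) ^ (s.getD i 0))) ⊤).toReal := by
  classical
  have hset : ∀ m : Fin s.length → ℕ, CondT s.length ⊤ m ↔
      m ∈ {m : Fin s.length → ℕ | (∀ i j : Fin s.length, i ≤ j → m j ≤ m i) ∧ ∀ i, 1 ≤ m i} := by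
    intro m; simp [CondT]
  have h1 := _root_.tsum_subtype
    {m : Fin s.length → ℕ | (∀ i j : Fin s.length, i ≤ j → m j ≤ m i) ∧ ∀ i, 1 ≤ m i}
    (fun m => ∏ i : Fin s.length, ENNReal.ofReal (x.getD i 0 ^ m i / (m i : ℝ) ^ (s.getD i 0)))
  have h2 : JJ s.length (fun i n => ENNReal.ofReal
      (x.getD i 0 ^ n / (n : ℝ) ^ (s.getD i 0))) ⊤ =
      ∑' m : {m : Fin s.length → ℕ // (∀ i j : Fin s.length, i ≤ j → m j ≤ m i) ∧ ∀ i, 1 ≤ m i},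
        ∏ i : Fin s.length, ENNReal.ofReal (x.getD i 0 ^ m.1 i / (m.1 i : ℝ) ^ (s.getD i 0)) := by
    unfold JJ
    simp only [hset]
    refine Eq.trans (tsum_congr fun m => ?_) h1.symm
    rw [Set.indicator_apply]
  rw [h2, ENNReal.tsum_toReal_eq]
  · unfold LiStar
    refine tsum_congr fun m => ?_
    have hnn : ∀ i ∈ (univ : Finset (Fin s.length)),
        0 ≤ x.getD i 0 ^ m.1 i / (m.1 i : ℝ) ^ (s.getD i 0) :=
      fun i _ => div_nonneg (pow_nonneg (hx i) _) (by positivity)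
    rw [← ENNReal.ofReal_prod_of_nonneg hnn, ENNReal.toReal_ofReal (prod_nonneg hnn)]
    refine prod_congr rfl fun i _ => ?_
    simp
  · intro m
    exact ENNReal.prod_ne_top fun i _ => ENNReal.ofReal_ne_top

theorem LiStar_Jr (k : ℕ) (s : List ℕ) (x : List ℝ) (hx : ∀ i, 0 ≤ x.getD i 0)
    (hs : s.length = k + 1) (h0 : s.getD 0 0 ≠ 0) :
    LiStar s x = (∑' n : ℕ, ENNReal.ofReal ((x.getD 0 0 ^ n / (n : ℝ) ^ (s.getD 0 0)) *
      Jr k (fun i n => x.getD (i + 1) 0 ^ n / (n : ℝ) ^ (s.getD (i + 1) 0)) n)).toReal := by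
  rw [LiStar_eq_s14 s x hx, hs]
  rw [JJ_top k (fun i n => x.getD i 0 ^ n / (n : ℝ) ^ (s.getD i 0))]
  · exact fun i n => div_nonneg (pow_nonneg (hx i) _) (by positivity)
  · rw [Nat.cast_zero, zero_pow h0, div_zero]

theorem flat_get (q a b : ℝ) (r i : ℕ) :
    ((List.replicate r [q, 1 / q]).flatten ++ [a, b]).getD i 0 =
      if i < 2 * r then (if i % 2 = 0 then q else 1 / q)
      else if i = 2 * r then a else if i = 2 * r + 1 then b else 0 := by
  induction r generalizing i with
  | zero =>
    rcases i with _ | _ | i <;> simp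
  | succ r ih =>
    rcases i with _ | _ | i
    · simp [List.replicate_succ]
    · simp [List.replicate_succ]
      intro h; omega
    · have := ih i
      simp only [List.replicate_succ, List.flatten_cons, List.cons_append, List.nil_append,
        List.getD_cons_succ]
      rw [this]
      have e1 : i + 1 + 1 < 2 * (r + 1) ↔ i < 2 * r := by omega
      have e2 : (i + 1 + 1) % 2 = i % 2 := by omega
      have e3 : i + 1 + 1 = 2 * (r + 1) ↔ i = 2 * r := by omega
      have e4 : i + 1 + 1 = 2 * (r + 1) + 1 ↔ i = 2 * r + 1 := by omega
      simp only [e1, e2, e3, e4]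

theorem LiStar_FF (q : ℝ) (hq : 0 < q) (b : ℝ) (hb : 0 ≤ b) (c : ℕ → ℝ)
    (hc : ∀ n, b ^ n = (1 / q) ^ n * c n) (r : ℕ) :
    LiStar (List.replicate (2 * (r + 1)) 1) ((List.replicate r [q, 1 / q]).flatten ++ [q, b]) =
    (∑' n : ℕ, ENNReal.ofReal (q ^ n / (n : ℝ) * FF q c r n)).toReal := by
  rw [LiStar_Jr (2 * r + 1)]
  · congr 1
    refine tsum_congr fun n => ?_
    congr 1
    have hs : ∀ i, i < 2 * (r + 1) → (List.replicate (2 * (r + 1)) 1).getD i 0 = 1 := by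
      intro i hi
      rw [List.getD_replicate _ hi]
    rw [hs 0 (by omega), pow_one, flat_get]
    congr 1
    · congr 2
      split_ifs <;> first | rfl | omega
    · apply Jr_FF
      · intro i hi n
        rw [hs _ (by omega), pow_one, flat_get, if_pos (by omega), if_neg (by omega)]
      · intro i hi n
        rw [hs _ (by omega), pow_one, flat_get]
        congr 2
        split_ifs <;> first | rfl | omega
      · intro n
        rw [hs _ (by omega), pow_one, flat_get, if_neg (by omega), if_neg (by omega),
          if_pos (by omega), hc]
        ring
  · intro i
    rw [flat_get]
    split_ifs <;> positivity
  · simp; ring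
  · rw [List.getD_replicate _ (by omega)]; norm_num

theorem LiStar_VV (r : ℕ) :
    LiStar (List.replicate (r + 1) 2) (List.replicate (r + 1) (1 : ℝ)) =
    (∑' n : ℕ, ENNReal.ofReal (VV r n / (n : ℝ) ^ 2)).toReal := by
  rw [LiStar_Jr r]
  · congr 1
    refine tsum_congr fun n => ?_
    congr 1
    rw [List.getD_replicate _ (by omega), List.getD_replicate _ (by omega)]
    rcases eq_or_ne n 0 with h | h
    · subst h; simp
    · rw [Jr_congr r _ (fun _ n => 1 / (n : ℝ) ^ 2), Jr_VV r n h]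
      · simp; ring
      · intro i hi n
        have hi' : i + 1 < r + 1 := by omega
        rw [List.getD_replicate _ hi', List.getD_replicate _ hi']
        simp
  · intro i
    rcases lt_or_ge i (r + 1) with h | h
    · rw [List.getD_replicate _ h]; norm_num
    · rw [List.getD_eq_default _ _ (by simpa using h)]
  · simp
  · rw [List.getD_replicate _ (by omega)]; norm_num

/-- `ζ*({2}_d)` as a difference of `2d`-dimensional multiple polylogarithms. -/
theorem stmt_14 (d : ℕ) (hd : 0 < d) (p : ℝ) (hp : p ∈ Set.Ioo (0 : ℝ) 1) :
    LiStar (List.replicate d 2) (List.replicate d (1 : ℝ)) =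
      LiStar (List.replicate (2 * d) 1)
          (List.replicate d [1 - p, 1 / (1 - p)]).flatten -
        LiStar (List.replicate (2 * d) 1)
          ((List.replicate (d - 1) [1 - p, 1 / (1 - p)]).flatten ++ [1 - p, 1]) := by
  obtain ⟨r, rfl⟩ : ∃ r, d = r + 1 := ⟨d - 1, by omega⟩
  obtain ⟨hp0, hp1⟩ := hp
  have hq : 0 < 1 - p := by linarith
  have hq1 : 1 - p < 1 := by linarith
  have e : (List.replicate (r + 1) [1 - p, 1 / (1 - p)]).flatten =
      (List.replicate r [1 - p, 1 / (1 - p)]).flatten ++ [1 - p, 1 / (1 - p)] := by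
    rw [List.replicate_succ', List.flatten_append]; simp
  rw [e, Nat.add_sub_cancel, LiStar_VV,
    LiStar_FF (1 - p) hq (1 / (1 - p)) (by positivity) (fun _ => 1) (fun n => by simp),
    LiStar_FF (1 - p) hq 1 zero_le_one (fun n => (1 - p) ^ n) (fun n => by
      rw [← mul_pow, one_div_mul_cancel hq.ne'])]
  exact main_ident (1 - p) hq hq1 r
end

section
/- Let d be a positive integer, let m_1,…,m_d and u_1,…,u_{d−1} be non-negative integers, and set s := (m_1+2, {1}_{u_1}, …, m_{d−1}+2, {1}_{u_{d−1}}, m_d+2), a tuple of length ‖s‖ with weight |s|. Let p ∈ [1/2, 3/2] with p ≠ 1. Then Li*_{{1}_{|s|}}( ⊔_{i=1}^{d−1}{1−p, {1}_{m_i}, 1/(1−p), {1}_{u_i}}, 1−p, {1}_{m_d+1} ) = −Li*_s({1}_{‖s‖−1}, 1 − 1/p). -/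
namespace P15

/-- basic summation operator -/
noncomputable def S (c : ℝ) (a : ℕ → ℝ) : ℕ → ℝ
  | 0 => 0
  | n + 1 => c * S c a n + a (n + 1) / ((n : ℝ) + 1)

/-- Euler transform -/
noncomputable def E (t : ℝ) (a : ℕ → ℝ) (n : ℕ) : ℝ :=
  ∑ k ∈ Finset.range (n + 1), (n.choose k : ℝ) * ((1 - t) ^ k * t ^ (n - k) * a k)

/-- geometric start sequence -/
noncomputable def Z (z : ℝ) (n : ℕ) : ℝ := if n = 0 then 0 else z ^ n

/-- the iterated sequence -/
noncomputable def G (c z : ℝ) : (d : ℕ) → (Fin (d + 1) → ℕ) → (Fin d → ℕ) → ℕ → ℝ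
  | 0, m, _ => (S c)^[m 0 + 1] (Z z)
  | d + 1, m, u => (S c)^[m 0 + 1] ((S 1)^[u 0 + 1]
      (G c z d (fun i => m i.succ) (fun i => u i.succ)))

theorem E_succ (t : ℝ) (a : ℕ → ℝ) (n : ℕ) :
    E t a (n + 1) = t * E t a n + (1 - t) * E t (fun k => a (k + 1)) n := by
  unfold E
  rw [Finset.sum_choose_succ_mul (fun i j => (1 - t) ^ i * t ^ j * a i) n, Finset.mul_sum,
    Finset.mul_sum]
  congr 1
  · apply Finset.sum_congr rfl
    intro k hk
    have : n + 1 - k = (n - k) + 1 := by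
      have := Finset.mem_range.1 hk
      omega
    rw [this]; ring
  · apply Finset.sum_congr rfl
    intro k hk
    ring

theorem E_absorb (t : ℝ) (a : ℕ → ℝ) (h : a 0 = 0) (n : ℕ) :
    (1 - t) * E t (fun k => a (k + 1) / ((k : ℝ) + 1)) n = E t a (n + 1) / ((n : ℝ) + 1) := by
  unfold E
  rw [Finset.sum_range_succ' _ (n + 1), h, Finset.mul_sum]
  simp only [mul_zero, add_zero]
  rw [Finset.sum_div]
  apply Finset.sum_congr rfl
  intro k hk
  have h1 : ((n : ℝ) + 1) * (n.choose k : ℝ) = ((n + 1).choose (k + 1) : ℝ) * ((k : ℝ) + 1) := by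
    exact_mod_cast Nat.add_one_mul_choose_eq n k
  have h2 : n + 1 - (k + 1) = n - k := by omega
  have h3 : ((n : ℝ) + 1) ≠ 0 := by positivity
  have h4 : ((k : ℝ) + 1) ≠ 0 := by positivity
  rw [h2]
  field_simp
  linear_combination ((1 - t) ^ (k + 1) * t ^ (n - k) * a (k + 1)) * h1

theorem E_lin (t c : ℝ) (a b : ℕ → ℝ) (n : ℕ) :
    E t (fun k => c * a k + b k) n = c * E t a n + E t b n := by
  unfold E
  rw [Finset.mul_sum, ← Finset.sum_add_distrib]
  apply Finset.sum_congr rfl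
  intro k hk
  ring

theorem E_zero (t : ℝ) (a : ℕ → ℝ) : E t a 0 = a 0 := by simp [E]

theorem E_S (t c : ℝ) (a : ℕ → ℝ) (h : a 0 = 0) :
    E t (S c a) = S (t + (1 - t) * c) (E t a) := by
  funext n
  induction n with
  | zero => rw [E_zero]; simp [S]
  | succ n ih =>
    rw [E_succ]
    have : (fun k => S c a (k + 1)) = fun k => c * S c a k + a (k + 1) / ((k : ℝ) + 1) := by
      funext k; rfl
    rw [this, E_lin, mul_add, E_absorb t a h]
    simp only [S]
    rw [← ih]; ring

theorem S_zero (c : ℝ) (a : ℕ → ℝ) : S c a 0 = 0 := rfl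

theorem S_it_zero (c : ℝ) (a : ℕ → ℝ) (h : a 0 = 0) (r : ℕ) : (S c)^[r] a 0 = 0 := by
  cases r with
  | zero => exact h
  | succ r => rw [Function.iterate_succ_apply']; rfl

theorem E_S_it (t c c' : ℝ) (hc : t + (1 - t) * c = c') (a : ℕ → ℝ) (h : a 0 = 0) (r : ℕ) :
    E t ((S c)^[r] a) = (S c')^[r] (E t a) := by
  induction r with
  | zero => rfl
  | succ r ih =>
    rw [Function.iterate_succ_apply', Function.iterate_succ_apply',
      E_S _ _ _ (S_it_zero c a h r), ih, hc]

theorem S_neg (c : ℝ) (a : ℕ → ℝ) : S c (-a) = - S c a := by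
  funext n
  induction n with
  | zero => simp [S]
  | succ n ih => simp only [S, Pi.neg_apply, ih]; ring

theorem S_it_neg (c : ℝ) (a : ℕ → ℝ) (r : ℕ) : (S c)^[r] (-a) = - (S c)^[r] a := by
  induction r with
  | zero => rfl
  | succ r ih => rw [Function.iterate_succ_apply', Function.iterate_succ_apply', ih, S_neg]

theorem E_Z (t z : ℝ) (h : t + (1 - t) * z = 0) : E t (Z z) = - Z t := by
  funext n
  cases n with
  | zero => rw [E_zero]; simp [Z]
  | succ n =>
    have := add_pow ((1 - t) * z) t (n + 1)
    rw [add_comm, h, zero_pow (by omega), Finset.sum_range_succ'] at this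
    unfold E
    rw [Finset.sum_range_succ']
    simp [Z] at this ⊢
    have h2 : ∀ k ∈ Finset.range (n + 1), ((n + 1).choose (k + 1) : ℝ) *
        ((1 - t) ^ (k + 1) * t ^ (n - k) * z ^ (k + 1)) =
        ((1 - t) * z) ^ (k + 1) * t ^ (n - k) * ((n + 1).choose (k + 1) : ℝ) := by
      intro k _
      rw [mul_pow]; ring
    rw [Finset.sum_congr rfl h2]
    linarith

theorem G_zero (c z : ℝ) (d : ℕ) (m : Fin (d + 1) → ℕ) (u : Fin d → ℕ) : G c z d m u 0 = 0 := by
  cases d with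
  | zero => rw [G, Function.iterate_succ_apply']; rfl
  | succ d => rw [G, Function.iterate_succ_apply']; rfl

theorem E_G (t c c' z : ℝ) (hc : t + (1 - t) * c = c') (hz : t + (1 - t) * z = 0)
    (d : ℕ) (m : Fin (d + 1) → ℕ) (u : Fin d → ℕ) :
    E t (G c z d m u) = - G c' t d m u := by
  induction d with
  | zero =>
    rw [G, G, E_S_it t c c' hc _ (by simp [Z]), E_Z t z hz, S_it_neg]
  | succ d ih =>
    rw [G, G, E_S_it t c c' hc, E_S_it t 1 1 (by ring), ih, S_it_neg, S_it_neg]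
    · exact G_zero _ _ _ _ _
    · exact S_it_zero _ _ (G_zero _ _ _ _ _) _

theorem E_SG (t c c' z : ℝ) (hc : t + (1 - t) * c = c') (hz : t + (1 - t) * z = 0)
    (d : ℕ) (m : Fin (d + 1) → ℕ) (u : Fin d → ℕ) :
    E t (S 1 (G c z d m u)) = - S 1 (G c' t d m u) := by
  rw [E_S _ _ _ (G_zero _ _ _ _ _), E_G t c c' z hc hz, S_neg]
  congr 2; ring

/-! Euler summability -/

theorem E_tendsto (t : ℝ) (h0 : 0 ≤ t) (h1 : t < 1) (a : ℕ → ℝ) (L : ℝ)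
    (h : Filter.Tendsto a Filter.atTop (nhds L)) :
    Filter.Tendsto (E t a) Filter.atTop (nhds L) := by
  have hsum : ∀ n, ∑ k ∈ Finset.range (n + 1), (n.choose k : ℝ) * ((1 - t) ^ k * t ^ (n - k)) = 1 := by
    intro n
    have := add_pow (1 - t) t n
    rw [show (1 - t) + t = 1 by ring, one_pow] at this
    refine Eq.trans (Finset.sum_congr rfl fun k _ => ?_) this.symm
    ring
  have hw : ∀ n k : ℕ, 0 ≤ (n.choose k : ℝ) * ((1 - t) ^ k * t ^ (n - k)) := by
    intro n k
    have : 0 ≤ 1 - t := by linarith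
    positivity
  have hlim : ∀ k : ℕ, Filter.Tendsto (fun n : ℕ => (n.choose k : ℝ) * ((1 - t) ^ k * t ^ (n - k)))
      Filter.atTop (nhds 0) := by
    intro k
    rw [← Filter.tendsto_add_atTop_iff_nat k]
    have hb := (tendsto_pow_const_mul_const_pow_of_abs_lt_one k
      (show |t| < 1 by rw [abs_of_nonneg h0]; exact h1))
    have hb2 := hb.const_mul ((k + 1 : ℝ) ^ k)
    rw [mul_zero] at hb2
    have h1' : ∀ n : ℕ, 0 ≤ 1 - t := fun _ => by linarith
    refine squeeze_zero' (Filter.Eventually.of_forall fun n => hw _ k) ?_ hb2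
    filter_upwards [Filter.eventually_ge_atTop 1] with n hn
    rw [Nat.add_sub_cancel]
    have e1 : ((n + k).choose k : ℝ) ≤ ((k + 1 : ℝ) * n) ^ k := by
      have : ((n + k).choose k : ℝ) ≤ ((n + k : ℕ) : ℝ) ^ k := by
        exact_mod_cast Nat.choose_le_pow (n + k) k
      refine this.trans (pow_le_pow_left₀ (by positivity) ?_ k)
      have : n + k ≤ (k + 1) * n := by nlinarith
      exact_mod_cast this
    have e2 : (1 - t) ^ k ≤ 1 := pow_le_one₀ (by linarith) (by linarith)
    have e3 : 0 ≤ t ^ n := by positivity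
    calc _ ≤ ((k + 1 : ℝ) * n) ^ k * (1 * t ^ n) := by gcongr
      _ = _ := by rw [mul_pow]; ring
  obtain ⟨M, hM⟩ := (h.sub_const L).norm.bddAbove_range
  have hM' : ∀ k, |a k - L| ≤ M := fun k => hM ⟨k, rfl⟩
  have hM0 : 0 ≤ M := (abs_nonneg _).trans (hM' 0)
  rw [Metric.tendsto_atTop]
  intro ε hε
  obtain ⟨K, hK⟩ := (Metric.tendsto_atTop.1 h) (ε / 2) (by linarith)
  have hfin : Filter.Tendsto (fun n : ℕ => ∑ k ∈ Finset.range K,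
      (n.choose k : ℝ) * ((1 - t) ^ k * t ^ (n - k)) * M) Filter.atTop (nhds 0) := by
    have := tendsto_finsetSum (Finset.range K) (fun k _ => (hlim k).mul_const M)
    simpa using this
  obtain ⟨N, hN⟩ := (Metric.tendsto_atTop.1 hfin) (ε / 2) (by linarith)
  refine ⟨max N K, fun n hn => ?_⟩
  have hnN : N ≤ n := (le_max_left _ _).trans hn
  have hnK : K ≤ n := (le_max_right _ _).trans hn
  have e1 := hN n hnN
  rw [Real.dist_eq, sub_zero] at e1
  have e1 := (le_abs_self _).trans_lt e1
  rw [Real.dist_eq]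
  have e2 : E t a n - L = ∑ k ∈ Finset.range (n + 1),
      (n.choose k : ℝ) * ((1 - t) ^ k * t ^ (n - k)) * (a k - L) := by
    have : L = ∑ k ∈ Finset.range (n + 1), (n.choose k : ℝ) * ((1 - t) ^ k * t ^ (n - k)) * L := by
      rw [← Finset.sum_mul, hsum, one_mul]
    conv_lhs => rw [this]
    unfold E
    rw [← Finset.sum_sub_distrib]
    exact Finset.sum_congr rfl fun k _ => by ring
  rw [e2]
  calc _ ≤ ∑ k ∈ Finset.range (n + 1),
      (n.choose k : ℝ) * ((1 - t) ^ k * t ^ (n - k)) * |a k - L| := by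
        refine (Finset.abs_sum_le_sum_abs _ _).trans (le_of_eq ?_)
        exact Finset.sum_congr rfl fun k _ => by rw [abs_mul, abs_of_nonneg (hw n k)]
    _ ≤ ∑ k ∈ Finset.range (n + 1), ((if k < K then
        (n.choose k : ℝ) * ((1 - t) ^ k * t ^ (n - k)) * M else 0) +
        (n.choose k : ℝ) * ((1 - t) ^ k * t ^ (n - k)) * (ε / 2)) := by
        apply Finset.sum_le_sum
        intro k _
        split_ifs with hk
        · have := mul_le_mul_of_nonneg_left (hM' k) (hw n k)
          have := mul_nonneg (hw n k) (half_pos hε).le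
          linarith
        · rw [zero_add]
          have := hK k (by omega)
          rw [Real.dist_eq] at this
          exact mul_le_mul_of_nonneg_left this.le (hw n k)
    _ = ∑ k ∈ Finset.range K, (n.choose k : ℝ) * ((1 - t) ^ k * t ^ (n - k)) * M + ε / 2 := by
        rw [Finset.sum_add_distrib, ← Finset.sum_mul _ _ (ε / 2), hsum, one_mul,
          ← Finset.sum_filter]
        congr 2
        ext k; simp; omega
    _ < ε := by linarith

/-! bounds -/

theorem S_nonneg (c : ℝ) (hc : 0 ≤ c) (a : ℕ → ℝ) (ha : ∀ n, 0 ≤ a n) (n : ℕ) : 0 ≤ S c a n := by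
  induction n with
  | zero => exact le_refl _
  | succ n ih => simp only [S]; have := ha (n + 1); positivity

/-- class of sequences of growth at most the square root -/
def PP (a : ℕ → ℝ) : Prop := (∀ n, 0 ≤ a n) ∧ ∃ C, ∀ n, a n ≤ C * √(n : ℝ)

/-- class of sequences of decay at least the inverse square root -/
def PM (a : ℕ → ℝ) : Prop := (∀ n, 0 ≤ a n) ∧ ∃ C, ∀ n, 1 ≤ n → a n ≤ C / √(n : ℝ)

theorem PP_S1 (a : ℕ → ℝ) (h : PP a) : PP (S 1 a) := by
  obtain ⟨h0, C, hC⟩ := h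
  refine ⟨S_nonneg 1 zero_le_one a h0, 2 * C, fun n => ?_⟩
  have hC0 : 0 ≤ C := by have := (h0 1).trans (hC 1); simpa using this
  induction n with
  | zero => simp [S]
  | succ n ih =>
    simp only [S]
    have h1 := hC (n + 1)
    push_cast at h1 ⊢
    set y := √((n : ℝ) + 1) with hy
    set x := √(n : ℝ) with hx
    have hy2 : y ^ 2 = n + 1 := Real.sq_sqrt (by positivity)
    have hx2 : x ^ 2 = n := Real.sq_sqrt (by positivity)
    have hy0 : 0 < y := Real.sqrt_pos.2 (by positivity)
    have hx0 : 0 ≤ x := Real.sqrt_nonneg _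
    have h2 : a (n + 1) / ((n : ℝ) + 1) ≤ C / y := by
      rw [div_le_div_iff₀ (by positivity) hy0, ← hy2]
      nlinarith
    have h3 : 1 / y ≤ 2 * y - 2 * x := by
      rw [div_le_iff₀ hy0]
      nlinarith [sq_nonneg (y - x)]
    have h4 : C / y ≤ C * (2 * y - 2 * x) := by
      rw [div_eq_mul_one_div]; exact mul_le_mul_of_nonneg_left h3 hC0
    nlinarith

theorem PM_S (c : ℝ) (hc0 : 0 ≤ c) (hc : c ≤ 1 / 2) (a : ℕ → ℝ) (h : PP a) : PM (S c a) := by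
  obtain ⟨h0, C, hC⟩ := h
  refine ⟨S_nonneg c hc0 a h0, 4 * C, fun n hn => ?_⟩
  have hC0 : 0 ≤ C := by have := (h0 1).trans (hC 1); simpa using this
  induction n, hn using Nat.le_induction with
  | base => 
    have := hC 1
    simp [S] at this ⊢
    linarith
  | succ n hn ih =>
    simp only [S]
    have h1 := hC (n + 1)
    push_cast at h1 ⊢
    set y := √((n : ℝ) + 1) with hy
    set x := √(n : ℝ) with hx
    have hn' : (1 : ℝ) ≤ n := by exact_mod_cast hn
    have hy2 : y ^ 2 = n + 1 := Real.sq_sqrt (by positivity)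
    have hx2 : x ^ 2 = n := Real.sq_sqrt (by positivity)
    have hy0 : 0 < y := Real.sqrt_pos.2 (by positivity)
    have hx0 : 0 < x := Real.sqrt_pos.2 (by positivity)
    have h2 : a (n + 1) / ((n : ℝ) + 1) ≤ C / y := by
      rw [div_le_div_iff₀ (by positivity) hy0, ← hy2]
      nlinarith
    have h3 : 2 * y ≤ 3 * x := by
      apply le_of_sq_le_sq _ (by positivity)
      nlinarith
    have h4 : 1 / x ≤ (3 / 2) / y := by
      rw [div_le_div_iff₀ hx0 hy0]; linarith
    have h5 : S c a n ≤ 4 * C * ((3 / 2) / y) := by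
      refine ih.trans ?_
      rw [div_eq_mul_one_div]
      exact mul_le_mul_of_nonneg_left h4 (by positivity)
    have h6 : c * S c a n ≤ 1 / 2 * (4 * C * ((3 / 2) / y)) :=
      mul_le_mul hc h5 (S_nonneg c hc0 a h0 n) (by norm_num)
    have : 4 * C / y = 1 / 2 * (4 * C * ((3 / 2) / y)) + C / y := by field_simp; ring
    linarith

theorem PM_PP (a : ℕ → ℝ) (h : PM a) (ha : a 0 = 0) : PP a := by
  obtain ⟨h0, C, hC⟩ := h
  refine ⟨h0, C, fun n => ?_⟩
  have hC0 : 0 ≤ C := by have := (h0 1).trans (hC 1 le_rfl); simpa using this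
  rcases Nat.eq_zero_or_pos n with rfl | hn
  · simp [ha]
  · refine (hC n hn).trans ?_
    have : 1 ≤ √(n : ℝ) := by rw [Real.one_le_sqrt]; exact_mod_cast hn
    rw [div_le_iff₀ (by linarith)]
    nlinarith [mul_le_mul this this zero_le_one (by linarith)]

theorem PP_Sc (c : ℝ) (hc0 : 0 ≤ c) (hc : c ≤ 1 / 2) (a : ℕ → ℝ) (h : PP a) : PP (S c a) :=
  PM_PP _ (PM_S c hc0 hc a h) rfl

theorem PP_S1_it (a : ℕ → ℝ) (h : PP a) (r : ℕ) : PP ((S 1)^[r] a) := by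
  induction r with
  | zero => exact h
  | succ r ih => rw [Function.iterate_succ_apply']; exact PP_S1 _ ih

theorem PP_Sc_it (c : ℝ) (hc0 : 0 ≤ c) (hc : c ≤ 1 / 2) (a : ℕ → ℝ) (h : PP a) (r : ℕ) :
    PP ((S c)^[r] a) := by
  induction r with
  | zero => exact h
  | succ r ih => rw [Function.iterate_succ_apply']; exact PP_Sc c hc0 hc _ ih

theorem PP_Z (z : ℝ) (h0 : 0 ≤ z) (h1 : z ≤ 1) : PP (Z z) := by
  refine ⟨fun n => ?_, 1, fun n => ?_⟩
  · unfold Z; split_ifs <;> positivity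
  · unfold Z
    split_ifs with h
    · simp [h]
    · have : 1 ≤ √(n : ℝ) := by rw [Real.one_le_sqrt]; exact_mod_cast Nat.pos_of_ne_zero h
      have := pow_le_one₀ (n := n) h0 h1
      linarith

theorem PM_G (c z : ℝ) (hc0 : 0 ≤ c) (hc : c ≤ 1 / 2) (h0 : 0 ≤ z) (h1 : z ≤ 1)
    (d : ℕ) (m : Fin (d + 1) → ℕ) (u : Fin d → ℕ) : PM (G c z d m u) := by
  induction d with
  | zero =>
    rw [G, Function.iterate_succ_apply']
    exact PM_S c hc0 hc _ (PP_Sc_it c hc0 hc _ (PP_Z z h0 h1) _)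
  | succ d ih =>
    rw [G, Function.iterate_succ_apply']
    refine PM_S c hc0 hc _ (PP_Sc_it c hc0 hc _ (PP_S1_it _ (PM_PP _ (ih _ _) ?_) _) _)
    exact G_zero _ _ _ _ _

theorem PM_S1_bdd (a : ℕ → ℝ) (h : PM a) : ∃ C, ∀ n, S 1 a n ≤ C := by
  obtain ⟨h0, C, hC⟩ := h
  have hC0 : 0 ≤ C := by have := (h0 1).trans (hC 1 le_rfl); simpa using this
  have key : ∀ n : ℕ, S 1 a (n + 1) ≤ C * (3 - 2 / √((n : ℝ) + 1)) := by
    intro n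
    induction n with
    | zero => 
      have := hC 1 le_rfl
      simp [S] at this ⊢
      linarith
    | succ n ih =>
      rw [S]
      have h1 := hC (n + 1 + 1) (by omega)
      push_cast at h1 ⊢
      set y := √((n : ℝ) + 1 + 1) with hy
      set x := √((n : ℝ) + 1) with hx
      have hy2 : y ^ 2 = n + 1 + 1 := Real.sq_sqrt (by positivity)
      have hx2 : x ^ 2 = n + 1 := Real.sq_sqrt (by positivity)
      have hy0 : 0 < y := Real.sqrt_pos.2 (by positivity)
      have hx0 : 0 < x := Real.sqrt_pos.2 (by positivity)
      have h2 : a (n + 1 + 1) / ((n : ℝ) + 1 + 1) ≤ C * (1 / (y * y ^ 2)) := by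
        rw [← hy2, div_le_iff₀ (by positivity)]
        refine h1.trans (le_of_eq ?_)
        field_simp
      have hxy : x ≤ y := Real.sqrt_le_sqrt (by linarith)
      have h3 : 1 / (y * y ^ 2) ≤ 2 / x - 2 / y := by
        have e : 2 / x - 2 / y = 2 * (y - x) / (x * y) := by field_simp
        rw [e, div_le_div_iff₀ (by positivity) (by positivity)]
        have e1 : (y - x) * (y + x) = 1 := by nlinarith
        have e2 : 1 ≤ 2 * (y - x) * y := by nlinarith
        have e3 : x * y ≤ y * y := by nlinarith
        nlinarith [mul_le_mul e2 e3 (by positivity) (by nlinarith)]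
      have h4 := mul_le_mul_of_nonneg_left h3 hC0
      nlinarith
  refine ⟨C * 3, fun n => ?_⟩
  cases n with
  | zero => rw [S_zero]; positivity
  | succ n =>
    refine (key n).trans (mul_le_mul_of_nonneg_left ?_ hC0)
    have : 0 ≤ 2 / √((n : ℝ) + 1) := by positivity
    linarith

/-! nested sums -/

/-- truncated nested sum -/
noncomputable def NN : List ℕ → List ℝ → ℕ → ℝ
  | [], _, _ => 1
  | a :: s, x, n => ∑ k ∈ Finset.Icc 1 n, x.getD 0 0 ^ k / (k : ℝ) ^ a * NN s x.tail k

/-- weighted nested sum -/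
noncomputable def F (w : ℝ) (s : List ℕ) (x : List ℝ) (n : ℕ) : ℝ :=
  if n = 0 then 0 else w ^ n * NN s x n

theorem F_nil (w : ℝ) (x : List ℝ) : F w [] x = Z w := by
  funext n; simp [F, Z, NN]

theorem S0_it (a : ℕ → ℝ) (h : a 0 = 0) (r n : ℕ) : (S 0)^[r] a n = a n / (n : ℝ) ^ r := by
  induction r generalizing n with
  | zero => simp
  | succ r ih =>
    rw [Function.iterate_succ_apply']
    cases n with
    | zero => simp [S, h]
    | succ n => simp only [S, ih]; push_cast; field_simp; ring

theorem F_cons (w y : ℝ) (r : ℕ) (s : List ℕ) (x : List ℝ) :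
    F w ((r + 1) :: s) (y :: x) = S w ((S 0)^[r] (F (w * y) s x)) := by
  funext n
  induction n with
  | zero => simp [F, S]
  | succ n ih =>
    rw [S, ← ih, S0_it _ (by simp [F])]
    simp only [F, NN]
    rw [Finset.sum_Icc_succ_top (by omega)]
    rcases Nat.eq_zero_or_pos n with rfl | hn
    · simp; ring
    · simp [hn.ne']
      have : (n : ℝ) + 1 ≠ 0 := by positivity
      field_simp
      ring

theorem F_ones (w : ℝ) (k : ℕ) (s : List ℕ) (x : List ℝ) :
    F w (List.replicate k 1 ++ s) (List.replicate k 1 ++ x) = (S w)^[k] (F w s x) := by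
  induction k with
  | zero => rfl
  | succ k ih =>
    rw [List.replicate_succ, List.replicate_succ, List.cons_append, List.cons_append,
      F_cons, mul_one, ih, Function.iterate_succ_apply']
    rfl

theorem xPre_succ (d : ℕ) (m : Fin (d + 1 + 1) → ℕ) (u : Fin (d + 1) → ℕ) (p : ℝ) :
    xPre (d + 1) m u p = (1 - p) :: (List.replicate (m 0) (1 : ℝ) ++
      ((1 / (1 - p)) :: (List.replicate (u 0) (1 : ℝ) ++
        xPre d (fun i => m i.succ) (fun i => u i.succ) p))) := by
  unfold xPre
  rw [List.ofFn_succ]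
  simp

theorem sTup_succ (d : ℕ) (m : Fin (d + 1 + 1) → ℕ) (u : Fin (d + 1) → ℕ) :
    sTup (d + 1) m u = (m 0 + 2) :: (List.replicate (u 0) 1 ++
        sTup d (fun i => m i.succ) (fun i => u i.succ)) := by
  unfold sTup
  rw [List.ofFn_succ]
  simp

theorem F_L (d : ℕ) (m : Fin (d + 1) → ℕ) (u : Fin d → ℕ) (p : ℝ) (hp : 1 - p ≠ 0) :
    F 1 (List.replicate (sTup d m u).sum 1)
        (xPre d m u p ++ (1 - p) :: List.replicate (m (Fin.last d) + 1) (1 : ℝ)) =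
      S 1 (G (1 - p) (1 - p) d m u) := by
  induction d with
  | zero =>
    have e : (sTup 0 m u).sum = (m 0 + 1) + 1 := by simp [sTup]
    have e2 : xPre 0 m u p = [] := by simp [xPre]
    rw [e, e2, List.nil_append, List.replicate_succ, F_cons, one_mul]
    have := F_ones (1 - p) (m 0 + 1) [] []
    rw [List.append_nil, List.append_nil] at this
    rw [show Fin.last 0 = 0 from rfl, this, F_nil]
    rfl
  | succ d ih =>
    have e : (sTup (d + 1) m u).sum = m 0 + (u 0 + (sTup d (fun i => m i.succ) (fun i => u i.succ)).sum + 1) + 1 := by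
      rw [sTup_succ]; simp; ring
    rw [e, xPre_succ, List.cons_append, List.append_assoc, List.cons_append, List.append_assoc,
      List.replicate_succ, F_cons, one_mul, List.replicate_add (m 0), F_ones, List.replicate_succ,
      F_cons, mul_one_div_cancel hp, List.replicate_add (u 0), F_ones]
    have := ih (fun i => m i.succ) (fun i => u i.succ)
    rw [Fin.succ_last] at this
    rw [this, G, Function.iterate_succ_apply, Function.iterate_succ_apply]
    rfl

theorem F_R (d : ℕ) (m : Fin (d + 1) → ℕ) (u : Fin d → ℕ) (t : ℝ) :
    F 1 (sTup d m u) (List.replicate ((sTup d m u).length - 1) (1 : ℝ) ++ [t]) =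
      S 1 (G 0 t d m u) := by
  induction d with
  | zero =>
    have e : sTup 0 m u = [m 0 + 1 + 1] := by simp [sTup]
    rw [e]
    simp only [List.length_singleton, Nat.sub_self, List.replicate_zero, List.nil_append]
    rw [F_cons, F_nil, one_mul]
    rfl
  | succ d ih =>
    set s' := sTup d (fun i => m i.succ) (fun i => u i.succ) with hs
    have hl : 1 ≤ s'.length := by rw [hs]; simp [sTup]
    have e : (sTup (d + 1) m u).length - 1 = (u 0 + (s'.length - 1)) + 1 := by
      rw [sTup_succ, ← hs]; simp; omega
    rw [e, sTup_succ, ← hs, List.replicate_succ, List.cons_append, F_cons, List.replicate_add,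
      List.append_assoc, one_mul, F_ones, ih, G, Function.iterate_succ_apply _ (u 0)]

/-! passage to LiStar -/

/-- the finite index set -/
def T : (k : ℕ) → ℕ → Finset (Fin k → ℕ)
  | 0, _ => {Fin.elim0}
  | k + 1, n => (Finset.Icc 1 n).biUnion fun j =>
      (T k j).image fun v => (Fin.cons j v : Fin (k + 1) → ℕ)

theorem mem_T (k n : ℕ) (v : Fin k → ℕ) :
    v ∈ T k n ↔ ((∀ i j : Fin k, i ≤ j → v j ≤ v i) ∧ ∀ i, 1 ≤ v i) ∧ ∀ i, v i ≤ n := by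
  induction k generalizing n with
  | zero => simp [T]; exact Subsingleton.elim _ _
  | succ k ih =>
    simp only [T, Finset.mem_biUnion, Finset.mem_Icc, Finset.mem_image]
    constructor
    · rintro ⟨j, ⟨h1, h2⟩, w, hw, rfl⟩
      obtain ⟨⟨ha, hb⟩, hc⟩ := (ih j w).1 hw
      refine ⟨⟨?_, ?_⟩, ?_⟩
      · intro a b hab
        induction a using Fin.cases with
        | zero =>
          induction b using Fin.cases with
          | zero => exact le_rfl
          | succ b => simpa using hc b
        | succ a =>
          induction b using Fin.cases with
          | zero => exact absurd hab (by simp)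
          | succ b => simpa using ha a b (by simpa using hab)
      · intro a
        induction a using Fin.cases with
        | zero => simpa using h1
        | succ a => simpa using hb a
      · intro a
        induction a using Fin.cases with
        | zero => simpa using h2
        | succ a => simpa using (hc a).trans h2
    · rintro ⟨⟨ha, hb⟩, hc⟩
      refine ⟨v 0, ⟨hb 0, hc 0⟩, Fin.tail v, ?_, Fin.cons_self_tail v⟩
      rw [ih]
      exact ⟨⟨fun i j hij => ha _ _ (by simpa using hij), fun i => hb _⟩,
        fun i => ha _ _ (Fin.zero_le _)⟩

/-- the summand -/
noncomputable def summand (s : List ℕ) (x : List ℝ) (v : Fin s.length → ℕ) : ℝ :=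
  ∏ i : Fin s.length, x.getD (i : ℕ) 0 ^ v i / (v i : ℝ) ^ s.get i

theorem sum_T (s : List ℕ) (x : List ℝ) (n : ℕ) : ∑ v ∈ T s.length n, summand s x v = NN s x n := by
  induction s generalizing x n with
  | nil => simp [T, summand, NN]
  | cons a s ih =>
    simp only [List.length_cons, T, NN]
    rw [Finset.sum_biUnion]
    · apply Finset.sum_congr rfl
      intro j _
      rw [Finset.sum_image, ← ih, Finset.mul_sum]
      · apply Finset.sum_congr rfl
        intro v _
        unfold summand
        simp only [List.length_cons]
        rw [Fin.prod_univ_succ]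
        congr 1
        apply Finset.prod_congr rfl
        intro i _
        cases x <;> simp
      · intro v _ w _ h
        exact (Fin.cons_right_injective (α := fun _ => ℕ) j) h
    · intro i _ j _ hij
      simp only [Function.onFun]
      rw [Finset.disjoint_left]
      intro v hv hw
      obtain ⟨v1, _, rfl⟩ := Finset.mem_image.1 hv
      obtain ⟨v2, _, h⟩ := Finset.mem_image.1 hw
      apply hij
      have := congrFun h 0
      simpa using this.symm

theorem summand_abs (s : List ℕ) (x : List ℝ) (v : Fin s.length → ℕ) :
    |summand s x v| = summand s (x.map abs) v := by
  unfold summand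
  rw [Finset.abs_prod]
  apply Finset.prod_congr rfl
  intro i _
  rw [abs_div, abs_pow, abs_pow, Nat.abs_cast]
  congr 2
  have := List.getD_map (f := (abs : ℝ → ℝ)) (l := x) (n := (i : ℕ)) (d := 0)
  rw [abs_zero] at this
  exact this.symm

theorem LiStar_tendsto (s : List ℕ) (x : List ℝ) (C : ℝ) (h : ∀ n, NN s (x.map abs) n ≤ C) :
    Filter.Tendsto (NN s x) Filter.atTop (nhds (LiStar s x)) := by
  let I := {m : Fin s.length → ℕ // (∀ i j : Fin s.length, i ≤ j → m j ≤ m i) ∧ ∀ i, 1 ≤ m i}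
  let f : I → ℝ := fun v => summand s x v.1
  let TT : ℕ → Finset I := fun n => (T s.length n).subtype _
  have hTT : ∀ n (v : I), v ∈ TT n ↔ ∀ i, v.1 i ≤ n := by
    intro n v
    refine Finset.mem_subtype.trans ((mem_T _ _ _).trans ?_)
    exact ⟨fun h => h.2, fun h => ⟨v.2, h⟩⟩
  have hsum : ∀ (y : List ℝ) n, ∑ v ∈ TT n, summand s y v.1 = NN s y n := by
    intro y n
    rw [← sum_T]
    exact Finset.sum_subtype_of_mem (fun v => summand s y v) (fun v hv => ((mem_T _ _ _).1 hv).1)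
  have hmono : Monotone TT := by
    intro a b hab v hv
    rw [hTT] at hv ⊢
    exact fun i => (hv i).trans hab
  have hex : ∀ v : I, ∃ n, v ∈ TT n := fun v =>
    ⟨∑ i, v.1 i, (hTT _ v).2 fun i => Finset.single_le_sum (fun _ _ => Nat.zero_le _) (Finset.mem_univ i)⟩
  have htop : Filter.Tendsto TT Filter.atTop Filter.atTop :=
    Filter.tendsto_atTop_finset_of_monotone hmono hex
  have hs : Summable fun v => |f v| := by
    refine summable_of_sum_le (c := C) (fun v => abs_nonneg _) fun t => ?_
    obtain ⟨n, hn⟩ := (htop.eventually_ge_atTop t).exists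
    calc _ ≤ ∑ v ∈ TT n, |f v| := Finset.sum_le_sum_of_subset_of_nonneg hn fun _ _ _ => abs_nonneg _
      _ = NN s (x.map abs) n := by
        rw [← hsum]; exact Finset.sum_congr rfl fun v _ => summand_abs s x v.1
      _ ≤ C := h n
  have := (hs.of_abs.hasSum).comp htop
  have e : (fun n => ∑ v ∈ TT n, f v) = NN s x := funext fun n => hsum x n
  rw [← e]
  exact this

theorem tendsto_of_F (s : List ℕ) (x : List ℝ) (a b : ℕ → ℝ) (h : F 1 s x = a)
    (hb : F 1 s (x.map abs) = b) (C : ℝ) (hC : ∀ n, b n ≤ C) :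
    Filter.Tendsto a Filter.atTop (nhds (LiStar s x)) := by
  have hz : ∀ y n, n ≠ 0 → F 1 s y n = NN s y n := by intro y n hn; simp [F, hn]
  have hm : NN s (x.map abs) 0 ≤ NN s (x.map abs) 1 := by
    cases s with
    | nil => simp [NN]
    | cons r s =>
      rw [← sum_T, ← sum_T]
      refine Finset.sum_le_sum_of_subset_of_nonneg ?_ ?_
      · intro v hv
        rw [mem_T] at hv ⊢
        exact ⟨hv.1, fun i => (hv.2 i).trans zero_le_one⟩
      · intro v _ _
        rw [← summand_abs]; exact abs_nonneg _
  have := LiStar_tendsto s x C (by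
    intro n
    rcases Nat.eq_zero_or_pos n with rfl | hn
    · rw [← hz _ 1 one_ne_zero, hb] at hm
      exact hm.trans (hC 1)
    · rw [← hz _ n hn.ne', hb]; exact hC n)
  refine this.congr' ?_
  filter_upwards [Filter.eventually_ge_atTop 1] with n hn
  rw [← h, hz _ n (by omega)]

theorem xPre_abs (d : ℕ) (m : Fin (d + 1) → ℕ) (u : Fin d → ℕ) (p : ℝ) :
    (xPre d m u p).map abs = xPre d m u (1 - |1 - p|) := by
  induction d with
  | zero => simp [xPre]
  | succ d ih =>
    rw [xPre_succ, xPre_succ, ← ih]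
    simp

end P15

open P15

/-- Depth-reduction formula (Corollary 3.2, first identity). -/
theorem stmt_15 (d : ℕ) (m : Fin (d + 1) → ℕ) (u : Fin d → ℕ) (p : ℝ)
    (hp : p ∈ Set.Icc (1 / 2 : ℝ) (3 / 2)) (hp1 : p ≠ 1) :
    LiStar (List.replicate (sTup d m u).sum 1)
        (xPre d m u p ++ (1 - p) :: List.replicate (m (Fin.last d) + 1) (1 : ℝ)) =
      -LiStar (sTup d m u)
        (List.replicate ((sTup d m u).length - 1) (1 : ℝ) ++ [1 - 1 / p]) := by
  obtain ⟨hl, hr⟩ := hp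
  have hp0 : 0 < p := by linarith
  have hq : 1 - p ≠ 0 := fun h => hp1 (by linarith)
  have hqa : |1 - p| ≤ 1 / 2 := abs_le.2 ⟨by linarith, by linarith⟩
  have hta : |1 - 1 / p| ≤ 1 := by
    have e1 : 1 / p ≤ 2 := by rw [div_le_iff₀ hp0]; linarith
    have e2 : 0 < 1 / p := by positivity
    exact abs_le.2 ⟨by linarith, by linarith⟩
  obtain ⟨C1, hC1⟩ := PM_S1_bdd _ (PM_G |1 - p| |1 - p| (abs_nonneg _) hqa (abs_nonneg _)
    (by linarith) d m u)
  obtain ⟨C2, hC2⟩ := PM_S1_bdd _ (PM_G 0 |1 - 1 / p| le_rfl (by norm_num) (abs_nonneg _) hta d m u)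
  have hL := tendsto_of_F _ _ _ (S 1 (G |1 - p| |1 - p| d m u)) (F_L d m u p hq) (by
    have := F_L d m u (1 - |1 - p|) (by simpa using hq)
    rw [sub_sub_cancel] at this
    rw [← this, List.map_append, xPre_abs]
    simp) C1 hC1
  have hR := tendsto_of_F _ _ _ (S 1 (G 0 |1 - 1 / p| d m u)) (F_R d m u (1 - 1 / p)) (by
    rw [← F_R]
    simp) C2 hC2
  rcases lt_or_gt_of_ne hp1 with h | h
  · have e := E_tendsto (1 - p) (by linarith) (by linarith) _ _ hR
    rw [E_SG (1 - p) 0 (1 - p) (1 - 1 / p) (by ring) (by field_simp; ring)] at e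
    have := tendsto_nhds_unique hL.neg e
    linarith
  · have h1p : 1 / p < 1 := by rw [div_lt_one hp0]; exact h
    have h2p : 0 < 1 / p := by positivity
    have e := E_tendsto (1 - 1 / p) (by linarith) (by linarith) _ _ hL
    rw [E_SG (1 - 1 / p) (1 - p) 0 (1 - p) (by field_simp; ring) (by field_simp; ring)] at e
    have := tendsto_nhds_unique hR.neg e
    linarith
end

section
/- Let n be a positive integer, a ∈ ℝ, and s = (s_1,…,s_d) ∈ ℕ^d with weight |s| = s_1 + … + s_d and partial sums |s|_r = s_1 + … + s_r (|s|_0 = 0). For indices n ≥ n_1 ≥ … ≥ n_{|s|} ≥ 1, set Q(s) := Σ_{r=1}^{d} (n_{|s|_{r−1}+1} − n_{|s|_r}). Then (1/(n+1)) · Σ_{k=1}^{n} ζ*_k(s; a) = Σ_{n ≥ n_1 ≥ … ≥ n_{|s|+1} ≥ 1} [ C(n_{|s|}, n_{|s|+1}) / C(Q(s)+n_{|s|}, n_{|s|+1}) ] · a^{n_{|s|+1}} / ( (Q(s)+n_{|s|}+1) · n_1 ⋯ n_{|s|} ). -/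
/-- `ent m α` is the entry `n_{α+1}` (0-indexed access) of the index tuple `m`,
with junk value `1` out of range. -/
def ent {L : ℕ} (m : Fin L → ℕ) (α : ℕ) : ℕ :=
  if h : α < L then m ⟨α, h⟩ else 1

/-- The finite set of index tuples `(n₁,…,n_L)` with `n ≥ n₁ ≥ n₂ ≥ ⋯ ≥ n_L ≥ 1`. -/
def Idx (n L : ℕ) : Finset (Fin L → ℕ) :=
  (Fintype.piFinset fun _ : Fin L => Finset.Icc 1 n).filter
    fun m => ∀ i j : Fin L, i ≤ j → m j ≤ m i

/-- Generalized multiple harmonic-star value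
`ζ*_k(s₁,…,s_d; a) = ∑_{k ≥ n₁ ≥ ⋯ ≥ n_d ≥ 1} a^{n_d}/(n₁^{s₁} ⋯ n_d^{s_d})`. -/
noncomputable def zetaStarK (k : ℕ) (s : List ℕ) (a : ℝ) : ℝ :=
  ∑ m ∈ Idx k s.length,
    a ^ ent m (s.length - 1) / ∏ i : Fin s.length, (m i : ℝ) ^ s.get i

/-- Mneimneh-like sum
`M_n^{(s₁,…,s_d)}(a,p) = ∑_{k=1}^n C(n,k)·p^k·(1-p)^{n-k}·ζ*_k(s;a)`. -/
noncomputable def M (n : ℕ) (s : List ℕ) (a p : ℝ) : ℝ :=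
  ∑ k ∈ Finset.Icc 1 n, (n.choose k : ℝ) * p ^ k * (1 - p) ^ (n - k) * zetaStarK k s a

/-- `Q(s)` as a function of the summation indices `n₁, n₂, …` (0-indexed via `ent`):
`Q(s) = ∑_{r=1}^{d} (n_{|s|_{r-1}+1} − n_{|s|_r})`. -/
def Qs (s : List ℕ) {L : ℕ} (t : Fin L → ℕ) : ℕ :=
  ∑ r ∈ Finset.range s.length,
    (ent t ((s.take r).sum) - ent t ((s.take (r + 1)).sum - 1))

open Finset

lemma sum_Icc_range (n : ℕ) (f : ℕ → ℝ) : ∑ k ∈ Icc 1 n, f k = ∑ k ∈ range n, f (k + 1) := by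
  induction n with
  | zero => simp
  | succ n ih => rw [sum_Icc_succ_top (by omega), sum_range_succ, ih]

/-- Binomial transform. -/
noncomputable def Tb (p : ℝ) (h : ℕ → ℝ) (n : ℕ) : ℝ :=
  ∑ k ∈ range n, (n.choose (k + 1) : ℝ) * p ^ (k + 1) * (1 - p) ^ (n - (k + 1)) * h (k + 1)

lemma Tb_rec (p : ℝ) (h : ℕ → ℝ) (n : ℕ) :
    Tb p h (n + 1) = (1 - p) * Tb p h n +
      ∑ k ∈ range (n + 1), (n.choose k : ℝ) * p ^ (k + 1) * (1 - p) ^ (n - k) * h (k + 1) := by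
  have h1 : (1 - p) * Tb p h n = ∑ k ∈ range (n + 1),
      (n.choose (k + 1) : ℝ) * p ^ (k + 1) * (1 - p) ^ (n - k) * h (k + 1) := by
    rw [sum_range_succ, Tb, mul_sum]
    simp only [Nat.choose_succ_self, Nat.cast_zero, zero_mul, add_zero]
    refine sum_congr rfl fun k hk => ?_
    have : n - k = n - (k + 1) + 1 := by have := mem_range.1 hk; omega
    rw [this, pow_succ (1 - p)]; ring
  rw [h1, ← sum_add_distrib, Tb]
  refine sum_congr rfl fun k hk => ?_
  rw [Nat.choose_succ_succ, Nat.add_sub_add_right]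
  push_cast; ring

lemma Tb_div (p : ℝ) (g : ℕ → ℝ) (n : ℕ) :
    ∑ k ∈ range (n + 1), (n.choose k : ℝ) * p ^ (k + 1) * (1 - p) ^ (n - k) *
      (g (k + 1) / ((k + 1 : ℕ) : ℝ)) = Tb p g (n + 1) / ((n + 1 : ℕ) : ℝ) := by
  rw [Tb, sum_div]
  refine sum_congr rfl fun k hk => ?_
  have h1 : (((n + 1) * n.choose k : ℕ) : ℝ) = (((n + 1).choose (k + 1) * (k + 1) : ℕ) : ℝ) := by
    rw [Nat.add_one_mul_choose_eq]
  push_cast at h1 ⊢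
  field_simp
  linear_combination p ^ (k + 1) * (1 - p) ^ (n - k) * g (k + 1) * h1

lemma Tb_D (p : ℝ) (g : ℕ → ℝ) (n : ℕ) :
    Tb p (fun k => g k / (k : ℝ)) n =
      ∑ j ∈ Icc 1 n, (1 - p) ^ (n - j) * (Tb p g j / (j : ℝ)) := by
  induction n with
  | zero => simp [Tb]
  | succ n ih =>
    rw [Tb_rec, Tb_div p g n, ih, sum_Icc_succ_top (by omega), mul_sum]
    simp only [Nat.sub_self, pow_zero, one_mul]
    congr 1
    refine sum_congr rfl fun k hk => ?_
    have : n + 1 - k = n - k + 1 := by have := mem_Icc.1 hk; omega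
    rw [this, pow_succ]; ring

lemma Tb_S (p : ℝ) (g : ℕ → ℝ) (n : ℕ) :
    Tb p (fun k => ∑ j ∈ Icc 1 k, g j / (j : ℝ)) n =
      ∑ j ∈ Icc 1 n, Tb p g j / (j : ℝ) := by
  induction n with
  | zero => simp [Tb]
  | succ n ih =>
    rw [sum_Icc_succ_top (by omega), ← ih, Tb_rec, ← Tb_div p g n]
    have h2 : ∑ k ∈ range (n + 1), (n.choose k : ℝ) * p ^ (k + 1) * (1 - p) ^ (n - k) *
        (∑ j ∈ Icc 1 k, g j / (j : ℝ)) =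
        p * Tb p (fun k => ∑ j ∈ Icc 1 k, g j / (j : ℝ)) n := by
      rw [sum_range_succ', Tb]
      rw [Icc_eq_empty (show ¬ (1 ≤ 0) by omega), sum_empty, mul_zero, add_zero, mul_sum]
      refine sum_congr rfl fun k hk => ?_
      ring
    have h3 : ∀ k, ∑ j ∈ Icc 1 (k + 1), g j / (j : ℝ) =
        ∑ j ∈ Icc 1 k, g j / (j : ℝ) + g (k + 1) / ((k + 1 : ℕ) : ℝ) := fun k =>
      sum_Icc_succ_top (by omega) _
    simp only [h3, mul_add, sum_add_distrib]
    rw [h2]; ring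

lemma beta_nat (m : ℕ) : ∀ j : ℕ, ∫ p in (0:ℝ)..1, p ^ j * (1 - p) ^ m =
    (j.factorial * m.factorial : ℝ) / (j + m + 1).factorial := by
  induction m with
  | zero =>
    intro j
    simp [Nat.factorial_succ]
    have : (j.factorial : ℝ) ≠ 0 := by positivity
    field_simp
  | succ m ih =>
    intro j
    have key := intervalIntegral.integral_mul_deriv_eq_deriv_mul (a := 0) (b := 1)
      (u := fun p : ℝ => (1 - p) ^ (m + 1)) (u' := fun p : ℝ => -((m + 1) * (1 - p) ^ m))
      (v := fun p : ℝ => p ^ (j + 1)) (v' := fun p : ℝ => (j + 1) * p ^ j)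
      (fun x _ => by
        have := ((hasDerivAt_id' x).const_sub 1).fun_pow (m + 1)
        refine this.congr_deriv ?_
        simp)
      (fun x _ => by
        have := (hasDerivAt_id' x).fun_pow (j + 1)
        refine this.congr_deriv ?_
        simp)
      (Continuous.intervalIntegrable (by fun_prop) _ _)
      (Continuous.intervalIntegrable (by fun_prop) _ _)
    have e1 : ∫ p in (0:ℝ)..1, (1 - p) ^ (m + 1) * ((j + 1) * p ^ j) =
        (j + 1) * ∫ p in (0:ℝ)..1, p ^ j * (1 - p) ^ (m + 1) := by
      rw [← intervalIntegral.integral_const_mul]; congr 1; ext p; ring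
    have e2 : ∫ p in (0:ℝ)..1, -((m + 1) * (1 - p) ^ m) * p ^ (j + 1) =
        -(m + 1) * ∫ p in (0:ℝ)..1, p ^ (j + 1) * (1 - p) ^ m := by
      rw [← intervalIntegral.integral_const_mul]; congr 1; ext p; ring
    rw [e1, e2, ih] at key
    simp at key
    have : (j + 1 + m + 1) = j + (m + 1) + 1 := by ring
    rw [this] at key
    have hj : (j + 1 : ℝ) ≠ 0 := by positivity
    apply mul_left_cancel₀ hj
    rw [key, Nat.factorial_succ j, Nat.factorial_succ m]
    push_cast; ring

lemma beta_choose (N j : ℕ) (h : j ≤ N) : ∫ p in (0:ℝ)..1, p ^ j * (1 - p) ^ (N - j) =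
    1 / ((N + 1 : ℝ) * (N.choose j : ℝ)) := by
  rw [beta_nat, Nat.add_sub_cancel' h, Nat.cast_choose ℝ h, Nat.factorial_succ]
  have := Nat.factorial_ne_zero
  field_simp
  push_cast
  ring

lemma ent_cons_zero {L : ℕ} (N : ℕ) (t : Fin L → ℕ) :
    ent (Fin.cons N t : Fin (L + 1) → ℕ) 0 = N := by
  simp [ent]

lemma ent_cons_succ {L : ℕ} (N : ℕ) (t : Fin L → ℕ) (i : ℕ) :
    ent (Fin.cons N t : Fin (L + 1) → ℕ) (i + 1) = ent t i := by
  unfold ent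
  by_cases h : i < L
  · rw [dif_pos h, dif_pos (by omega)]
    exact Fin.cons_succ (α := fun _ => ℕ) N t ⟨i, h⟩
  · rw [dif_neg h, dif_neg (by omega)]

lemma mem_Idx {n L : ℕ} {m : Fin L → ℕ} : m ∈ Idx n L ↔
    (∀ i, 1 ≤ m i ∧ m i ≤ n) ∧ ∀ i j : Fin L, i ≤ j → m j ≤ m i := by
  simp [Idx, Fintype.mem_piFinset]

lemma cons_mem_Idx {n L j : ℕ} {m : Fin L → ℕ} :
    (Fin.cons j m : Fin (L + 1) → ℕ) ∈ Idx n (L + 1) ↔ j ∈ Icc 1 n ∧ m ∈ Idx j L := by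
  simp only [mem_Idx, Fin.forall_fin_succ, Fin.cons_zero, Fin.cons_succ, mem_Icc, Fin.zero_le,
    Fin.succ_le_succ_iff, le_refl]
  constructor
  · rintro ⟨⟨h1, h2⟩, h3, h4⟩
    refine ⟨h1, fun i => ⟨(h2 i).1, by have := h3.2 i; simpa using this⟩, fun i k => ?_⟩
    simpa using (h4 i).2 k
  · rintro ⟨h1, h2, h3⟩
    refine ⟨⟨h1, fun i => ⟨(h2 i).1, (h2 i).2.trans h1.2⟩⟩, ⟨by simp, fun i => by
      simpa using (h2 i).2⟩, fun i => ⟨by simp, fun k => by simpa using h3 i k⟩⟩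

lemma sum_Idx_succ (n L : ℕ) (F : (Fin (L + 1) → ℕ) → ℝ) :
    ∑ t ∈ Idx n (L + 1), F t = ∑ j ∈ Icc 1 n, ∑ m ∈ Idx j L, F (Fin.cons j m) := by
  rw [sum_sigma']
  symm
  refine sum_bij' (fun x _ => Fin.cons x.1 x.2) (fun t _ => ⟨t 0, Fin.tail t⟩) ?_ ?_ ?_ ?_ ?_
  · rintro ⟨j, m⟩ h
    exact cons_mem_Idx.2 (mem_sigma.1 h)
  · intro t h
    rw [← Fin.cons_self_tail t] at h
    exact mem_sigma.2 (cons_mem_Idx.1 h)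
  · rintro ⟨j, m⟩ h; simp
  · intro t h; simp
  · rintro ⟨j, m⟩ h; rfl

lemma Idx_zero (n : ℕ) (F : (Fin 0 → ℕ) → ℝ) : ∑ t ∈ Idx n 0, F t = F Fin.elim0 := by
  have : Idx n 0 = {Fin.elim0} := by
    ext t; simp [mem_Idx, Subsingleton.elim t Fin.elim0]
  rw [this, sum_singleton]

/-- Nested sums in recursive form. -/
noncomputable def zz (a : ℝ) : List ℕ → ℕ → ℝ
  | [], k => a ^ k
  | e :: s, k => ∑ j ∈ Icc 1 k, zz a s j / (j : ℝ) ^ e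

lemma zz_eq (a : ℝ) (s : List ℕ) : ∀ k, zz a s k = ∑ m ∈ Idx k s.length,
    a ^ ent (Fin.cons k m : Fin (s.length + 1) → ℕ) s.length /
      ∏ i : Fin s.length, (m i : ℝ) ^ s.get i := by
  induction s with
  | nil =>
    intro k
    simp only [List.length_nil]
    rw [Idx_zero]
    simp [zz, ent_cons_zero]
  | cons e s ih =>
    intro k
    simp only [List.length_cons]
    rw [sum_Idx_succ, zz]
    refine sum_congr rfl fun j hj => ?_
    rw [ih, sum_div]
    refine sum_congr rfl fun m hm => ?_
    rw [ent_cons_succ, Fin.prod_univ_succ]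
    simp only [Fin.cons_zero, Fin.cons_succ, List.get_cons_zero, List.get_cons_succ']
    rw [div_div, mul_comm]

lemma zetaStarK_eq (k : ℕ) (s : List ℕ) (a : ℝ) (hd : s ≠ []) : zetaStarK k s a = zz a s k := by
  rw [zz_eq, zetaStarK]
  obtain ⟨e, s, rfl⟩ := List.exists_cons_of_ne_nil hd
  refine sum_congr rfl fun m hm => ?_
  simp only [List.length_cons, ent_cons_succ, Nat.add_sub_cancel]

/-- `Q` on functions. -/
def Qf (s : List ℕ) (f : ℕ → ℕ) : ℕ :=
  ∑ r ∈ range s.length, (f ((s.take r).sum) - f ((s.take (r + 1)).sum - 1))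

lemma Qs_eq (s : List ℕ) {L : ℕ} (t : Fin L → ℕ) : Qs s t = Qf s (ent t) := rfl

lemma Qf_cons (e : ℕ) (s : List ℕ) (hs : ∀ x ∈ s, 1 ≤ x) (f : ℕ → ℕ) :
    Qf ((e + 1) :: s) f = (f 0 - f e) + Qf s (fun i => f (i + (e + 1))) := by
  unfold Qf
  rw [List.length_cons, sum_range_succ', add_comm (_ - _)]
  congr 1
  · refine sum_congr rfl fun r hr => ?_
    have hr := mem_range.1 hr
    have h1 : 1 ≤ (s.take (r + 1)).sum := by
      obtain ⟨x, s', rfl⟩ := List.exists_cons_of_ne_nil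
        (show s ≠ [] by rintro rfl; simp at hr)
      have := hs x (by simp)
      simp; omega
    simp only [List.take_succ_cons, List.sum_cons]
    congr 2 <;> omega

/-- Summand at the bottom. -/
noncomputable def Bt (p a : ℝ) (N j : ℕ) : ℝ := (N.choose j : ℝ) * p ^ j * (1 - p) ^ (N - j) * a ^ j

lemma ent_le_ent {n L : ℕ} {t : Fin L → ℕ} (ht : t ∈ Idx n L) {i j : ℕ} (hij : i ≤ j)
    (hj : j < L) : ent t j ≤ ent t i := by
  rw [ent, ent, dif_pos hj, dif_pos (by omega)]
  exact (mem_Idx.1 ht).2 _ _ hij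

def ClaimA (p a : ℝ) (s : List ℕ) : Prop := ∀ N L : ℕ, L = s.sum + 1 →
  Tb p (zz a s) N = ∑ t ∈ Idx N L, (1 - p) ^ Qf s (ent t) *
    Bt p a (ent (Fin.cons N t : Fin (L + 1) → ℕ) s.sum) (ent t s.sum) /
      ∏ i ∈ range s.sum, (ent t i : ℝ)

def ClaimV (p a : ℝ) (e : ℕ) (s : List ℕ) : Prop := ∀ N L : ℕ, L = e + s.sum + 1 →
  Tb p (fun k => zz a s k / (k : ℝ) ^ e) N = ∑ t ∈ Idx N L,
    (1 - p) ^ Qf ((e + 1) :: s) (ent (Fin.cons N t : Fin (L + 1) → ℕ)) *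
    Bt p a (ent (Fin.cons N t : Fin (L + 1) → ℕ) (e + s.sum)) (ent t (e + s.sum)) /
      ∏ i ∈ range (e + s.sum), (ent t i : ℝ)

lemma claimA_nil (p a : ℝ) : ClaimA p a [] := by
  intro N L hL
  simp at hL
  subst hL
  rw [sum_Idx_succ]
  simp only [Idx_zero, List.sum_nil, ent_cons_zero, range_zero, prod_empty, div_one, Qf,
    List.length_nil, sum_empty, pow_zero, one_mul, Bt]
  rw [Tb, sum_Icc_range]
  simp only [zz]

lemma claimV_zero (p a : ℝ) (s : List ℕ) (hs : ∀ x ∈ s, 1 ≤ x) (h : ClaimA p a s) :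
    ClaimV p a 0 s := by
  intro N L hL
  simp only [pow_zero, div_one]
  rw [h N L (by omega)]
  refine sum_congr rfl fun t ht => ?_
  rw [Qf_cons 0 s hs]
  simp only [zero_add, ent_cons_succ, Nat.sub_self]

lemma claimV_succ (p a : ℝ) (e : ℕ) (s : List ℕ) (hs : ∀ x ∈ s, 1 ≤ x) (h : ClaimV p a e s) :
    ClaimV p a (e + 1) s := by
  intro N L hL
  obtain ⟨L, rfl⟩ : ∃ L', L = L' + 1 := ⟨e + s.sum + 1, by omega⟩
  have h0 : (fun k : ℕ => zz a s k / (k : ℝ) ^ (e + 1)) =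
      fun k : ℕ => (fun k : ℕ => zz a s k / (k : ℝ) ^ e) k / (k : ℝ) := by
    ext k; rw [pow_succ, div_div]
  rw [h0, Tb_D, sum_Idx_succ]
  refine sum_congr rfl fun j hj => ?_
  rw [h j L (by omega), sum_div, mul_sum]
  refine sum_congr rfl fun t ht => ?_
  have hmem := cons_mem_Idx.2 ⟨hj, ht⟩
  have hle : ent (Fin.cons j t : Fin (L + 1) → ℕ) e ≤ j := by
    have := ent_le_ent hmem (Nat.zero_le e) (by omega)
    rwa [ent_cons_zero] at this
  have hjN := (mem_Icc.1 hj).2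
  have hQ : Qf ((e + 1 + 1) :: s) (ent (Fin.cons N (Fin.cons j t : Fin (L + 1) → ℕ) :
      Fin (L + 1 + 1) → ℕ)) =
      (N - j) + Qf ((e + 1) :: s) (ent (Fin.cons j t : Fin (L + 1) → ℕ)) := by
    rw [Qf_cons (e + 1) s hs, Qf_cons e s hs, ent_cons_zero, ent_cons_zero]
    simp only [← add_assoc, ent_cons_succ]
    omega
  rw [hQ, pow_add, show e + 1 + s.sum = e + s.sum + 1 by omega, prod_range_succ']
  simp only [ent_cons_succ, ent_cons_zero]
  rw [div_div]
  ring

lemma claimA_cons (p a : ℝ) (e : ℕ) (s : List ℕ) (h : ClaimV p a e s) :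
    ClaimA p a ((e + 1) :: s) := by
  intro N L hL
  simp only [List.sum_cons] at hL
  obtain ⟨L, rfl⟩ : ∃ L', L = L' + 1 := ⟨e + s.sum + 1, by omega⟩
  have h0 : zz a ((e + 1) :: s) =
      fun k : ℕ => ∑ j ∈ Icc 1 k, (fun k : ℕ => zz a s k / (k : ℝ) ^ e) j / (j : ℝ) := by
    ext k; rw [zz]; refine sum_congr rfl fun j _ => ?_; rw [pow_succ, div_div]
  rw [h0, Tb_S, sum_Idx_succ]
  refine sum_congr rfl fun j hj => ?_
  rw [h j L (by omega), sum_div]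
  refine sum_congr rfl fun t ht => ?_
  rw [List.sum_cons, show e + 1 + s.sum = e + s.sum + 1 by omega, prod_range_succ']
  simp only [ent_cons_succ, ent_cons_zero]
  rw [div_div]

lemma claimA (p a : ℝ) (s : List ℕ) (hs : ∀ x ∈ s, 1 ≤ x) : ClaimA p a s := by
  induction s with
  | nil => exact claimA_nil p a
  | cons x s ih =>
    have hs' : ∀ x ∈ s, 1 ≤ x := fun y hy => hs y (by simp [hy])
    obtain ⟨e, rfl⟩ : ∃ e, x = e + 1 := ⟨x - 1, by have := hs x (by simp); omega⟩
    apply claimA_cons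
    clear hs
    induction e with
    | zero => exact claimV_zero p a s hs' (ih hs')
    | succ e ihe => exact claimV_succ p a e s hs' ihe

lemma integral_Tb (h : ℕ → ℝ) (n : ℕ) : ∫ p in (0:ℝ)..1, Tb p h n =
    1 / (n + 1 : ℝ) * ∑ k ∈ Icc 1 n, h k := by
  unfold Tb
  rw [intervalIntegral.integral_finsetSum
    (fun i _ => Continuous.intervalIntegrable (by fun_prop) _ _),
    sum_Icc_range, mul_sum]
  refine sum_congr rfl fun k hk => ?_
  have hk' : k + 1 ≤ n := mem_range.1 hk
  have e : ∀ p : ℝ, (n.choose (k + 1) : ℝ) * p ^ (k + 1) * (1 - p) ^ (n - (k + 1)) * h (k + 1) =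
    ((n.choose (k + 1) : ℝ) * h (k + 1)) * (p ^ (k + 1) * (1 - p) ^ (n - (k + 1))) := by
    intro p; ring
  simp only [e]
  rw [intervalIntegral.integral_const_mul, beta_choose n (k + 1) hk']
  have : (n.choose (k + 1) : ℝ) ≠ 0 := by exact_mod_cast (Nat.choose_pos hk').ne'
  field_simp

/-- Transformation of the arithmetic mean of `ζ*_k(s; a)`, `k = 1,…,n`. -/
theorem stmt_18 (n : ℕ) (hn : 0 < n) (a : ℝ) (s : List ℕ) (hd : s ≠ [])
    (hpos : ∀ e ∈ s, 1 ≤ e) :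
    1 / (n + 1 : ℝ) * ∑ k ∈ Finset.Icc 1 n, zetaStarK k s a =
      ∑ t ∈ Idx n (s.sum + 1),
        ((ent t (s.sum - 1)).choose (ent t s.sum) : ℝ) /
            ((Qs s t + ent t (s.sum - 1)).choose (ent t s.sum) : ℝ) *
          (a ^ ent t s.sum /
            (((Qs s t : ℝ) + (ent t (s.sum - 1) : ℝ) + 1) *
              ∏ i ∈ Finset.range s.sum, (ent t i : ℝ))) := by
  have hs : 1 ≤ s.sum := by
    obtain ⟨x, s', rfl⟩ := List.exists_cons_of_ne_nil hd
    have := hpos x (by simp)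
    simp; omega
  have h1 : ∑ k ∈ Finset.Icc 1 n, zetaStarK k s a = ∑ k ∈ Finset.Icc 1 n, zz a s k :=
    Finset.sum_congr rfl fun k _ => zetaStarK_eq k s a hd
  rw [h1, ← integral_Tb]
  simp only [fun p : ℝ => claimA p a s hpos n (s.sum + 1) rfl]
  rw [intervalIntegral.integral_finsetSum
    (fun i _ => Continuous.intervalIntegrable (by unfold Bt; fun_prop) _ _)]
  refine Finset.sum_congr rfl fun t ht => ?_
  obtain ⟨w, hw⟩ : ∃ w, s.sum = w + 1 := ⟨s.sum - 1, by omega⟩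
  have hle : ent t s.sum ≤ ent t (s.sum - 1) := ent_le_ent ht (by omega) (by omega)
  have hc : ent (Fin.cons n t : Fin (s.sum + 1 + 1) → ℕ) s.sum = ent t (s.sum - 1) := by
    have := ent_cons_succ n t (s.sum - 1)
    rwa [Nat.sub_add_cancel hs] at this
  rw [hc, Qs_eq]
  generalize ent t s.sum = j at *
  generalize ent t (s.sum - 1) = N at *
  generalize Qf s (ent t) = Q at *
  generalize ∏ i ∈ Finset.range s.sum, (ent t i : ℝ) = P at *
  have e : ∀ p : ℝ, (1 - p) ^ Q * Bt p a N j / P =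
      ((N.choose j : ℝ) * a ^ j / P) * (p ^ j * (1 - p) ^ (Q + N - j)) := by
    intro p
    rw [Bt, show Q + N - j = Q + (N - j) by omega, pow_add]; ring
  simp only [e]
  rw [intervalIntegral.integral_const_mul, beta_choose (Q + N) j (by omega)]
  push_cast
  simp only [div_eq_mul_inv, mul_inv]
  ring
end
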